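/- arXiv:2604.11597 — 6 statements merged into one kernel-verified Lean document; each statement's English description precedes it below -/
import Mathlib

section
/- Let f : ℝ → ℝ be a smooth double-well potential: f ∈ C^∞(ℝ), f even, f(±1) = 0, f'(±1) = 0, f''(±1) > 0, and f > 0 on (−1,1). Then the ODE θ₀''(ρ) = f'(θ₀(ρ)) for all ρ ∈ ℝ, with lim_{ρ→±∞} θ₀(ρ) = ±1 and θ₀(0) = 0, has a unique solution θ₀ (the optimal profile). Moreover, with α := min(√(f''(1)), √(f''(−1))), for every k ∈ ℕ₀ there is C_k > 0 such that |d^k/dρ^k ( θ₀(ρ) − 1 )| ≤ C_k e^{−α|ρ|} for ρ ≥ 0 and |d^k/dρ^k ( θ₀(ρ) + 1 )| ≤ C_k e^{−α|ρ|} for ρ ≤ 0. -/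
open Real Filter

lemma aux_taylor (f : ℝ → ℝ) (hf : ContDiff ℝ (⊤ : ℕ∞) f) (hfeven : ∀ x, f (-x) = f x)
    (hfm1 : f (-1) = 0) (hf'm1 : deriv f (-1) = 0) :
    ∃ M > 0, ∀ y ∈ Set.Icc (0:ℝ) 1,
      |2 * f y - iteratedDeriv 2 f (-1) * (1 - y)^2| ≤ M * (1 - y)^3 := by
  have hle : (-1:ℝ) ≤ 0 := by norm_num
  have hlt : (-1:ℝ) < 0 := by norm_num
  have hmem : (-1:ℝ) ∈ Set.Icc (-1:ℝ) 0 := ⟨le_refl _, hle⟩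
  obtain ⟨C, hC⟩ := exists_taylor_mean_remainder_bound (f := f) (n := 2) hle
    (by simpa using! (contDiff_infty.1 hf (2+1)).contDiffOn)
  refine ⟨2 * (|C| + 1), by positivity, fun y hy => ?_⟩
  have h := hC (-y) ⟨by linarith [hy.2], by linarith [hy.1]⟩
  have e1 : iteratedDerivWithin 1 f (Set.Icc (-1) 0) (-1) = 0 := by
    rw [iteratedDerivWithin_eq_iteratedDeriv (uniqueDiffOn_Icc hlt)
      ((contDiff_infty.1 hf 1).contDiffAt) hmem, iteratedDeriv_one, hf'm1]
  have e2 : iteratedDerivWithin 2 f (Set.Icc (-1) 0) (-1) = iteratedDeriv 2 f (-1) :=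
    iteratedDerivWithin_eq_iteratedDeriv (uniqueDiffOn_Icc hlt)
      ((contDiff_infty.1 hf 2).contDiffAt) hmem
  rw [taylorWithinEval_succ, taylorWithinEval_succ, taylor_within_zero_eval] at h
  norm_num [e1, e2, hfm1, hfeven] at h
  have h3 : 0 ≤ (1 - y)^3 := pow_nonneg (by linarith [hy.2]) 3
  have h4 : C * (-y+1)^3 ≤ (|C|+1) * (1-y)^3 := by
    rw [show -y+1 = 1 - y by ring]
    exact mul_le_mul_of_nonneg_right (by linarith [le_abs_self C]) h3
  rw [abs_le] at h ⊢
  constructor <;> nlinarith [h.1, h.2]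

lemma aux_lower (f : ℝ → ℝ) (hf : Continuous f) (a M : ℝ) (ha : 0 < a) (hM : 0 < M)
    (hfpos : ∀ x ∈ Set.Ioo (-1:ℝ) 1, 0 < f x)
    (h : ∀ y ∈ Set.Icc (0:ℝ) 1, |2 * f y - a * (1 - y)^2| ≤ M * (1 - y)^3) :
    ∃ c > 0, ∀ y ∈ Set.Icc (0:ℝ) 1, c^2 * (1-y)^2 ≤ 2 * f y := by
  have hd : 0 < a / (2 * M) := by positivity
  obtain ⟨m, hm, hm'⟩ := (isCompact_Icc (a := (0:ℝ)) (b := 1 - a/(2*M))).exists_forall_le'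
    (f := f) (a := 0) hf.continuousOn
    (fun b hb => hfpos b ⟨by linarith [hb.1], by linarith [hb.2]⟩)
  have hmin : 0 < min (a/2) (2*m) := lt_min (by positivity) (by positivity)
  refine ⟨√(min (a/2) (2*m)), Real.sqrt_pos.2 hmin, fun y hy => ?_⟩
  rw [Real.sq_sqrt hmin.le]
  have h1y : 0 ≤ 1 - y := by linarith [hy.2]
  by_cases hc : 1 - y ≤ a/(2*M)
  · have h1 := (abs_le.1 (h y hy)).1
    have h2 : M * (1-y) ≤ a/2 := by
      calc M * (1-y) ≤ M * (a/(2*M)) := by gcongr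
        _ = a/2 := by field_simp
    have h3 : M * (1-y)^3 ≤ a/2 * (1-y)^2 := by
      calc M * (1-y)^3 = M*(1-y) * (1-y)^2 := by ring
        _ ≤ _ := by gcongr
    have h4 : min (a/2) (2*m) * (1-y)^2 ≤ a/2 * (1-y)^2 := by
      gcongr; exact min_le_left _ _
    linarith
  · have h1 := hm' y ⟨hy.1, by linarith⟩
    have h4 : min (a/2) (2*m) * (1-y)^2 ≤ 2*m * 1 := by
      gcongr
      · exact min_le_right _ _
      · exact pow_le_one₀ h1y (by linarith [hy.1])
    linarith

lemma aux_G (f : ℝ → ℝ) (hf : Continuous f) (hfeven : ∀ x, f (-x) = f x)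
    (hfpos : ∀ x ∈ Set.Ioo (-1:ℝ) 1, 0 < f x) :
    ∃ G : ℝ → ℝ, (∀ x ∈ Set.Ioo (-1:ℝ) 1, HasDerivAt G (√(2 * f x))⁻¹ x) ∧ G 0 = 0 ∧
      ∀ x, G (-x) = - G x := by
  have hc : ContinuousOn (fun x => (√(2 * f x))⁻¹) (Set.Ioo (-1:ℝ) 1) := by
    apply ContinuousOn.inv₀
    · exact (by fun_prop : Continuous (fun x => √(2 * f x))).continuousOn
    · intro x hx
      exact (Real.sqrt_pos.2 (by linarith [hfpos x hx])).ne'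
  refine ⟨fun x => ∫ t in (0:ℝ)..x, (√(2 * f t))⁻¹, fun x hx => ?_, by simp, fun x => ?_⟩
  · apply intervalIntegral.integral_hasDerivAt_right
    · apply ContinuousOn.intervalIntegrable
      apply hc.mono
      exact (Set.ordConnected_Ioo.uIcc_subset (by norm_num) hx)
    · exact hc.stronglyMeasurableAtFilter isOpen_Ioo x hx
    · exact hc.continuousAt (isOpen_Ioo.mem_nhds hx)
  · have := intervalIntegral.integral_comp_neg (a := 0) (b := x) (fun t => (√(2 * f t))⁻¹)
    simp only [hfeven, neg_zero] at this
    simp only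
    rw [this, intervalIntegral.integral_symm]

lemma aux_Gbound (f G : ℝ → ℝ) (a M c : ℝ) (ha : 0 < a) (hM : 0 < M) (hc : 0 < c)
    (hfpos : ∀ x ∈ Set.Ioo (-1:ℝ) 1, 0 < f x)
    (h : ∀ y ∈ Set.Icc (0:ℝ) 1, |2 * f y - a * (1 - y)^2| ≤ M * (1 - y)^3)
    (h2 : ∀ y ∈ Set.Icc (0:ℝ) 1, c^2 * (1-y)^2 ≤ 2 * f y)
    (hG : ∀ x ∈ Set.Ioo (-1:ℝ) 1, HasDerivAt G (√(2 * f x))⁻¹ x) (hG0 : G 0 = 0) :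
    ∃ B, ∀ y ∈ Set.Ico (0:ℝ) 1, |√a * G y + Real.log (1 - y)| ≤ B := by
  set α := √a with hα
  have hα0 : 0 < α := Real.sqrt_pos.2 ha
  have hα2 : α^2 = a := Real.sq_sqrt ha.le
  have hder : ∀ y ∈ Set.Ico (0:ℝ) 1, HasDerivWithinAt (fun y => α * G y + Real.log (1 - y))
      (α * (√(2 * f y))⁻¹ + (-1) / (1-y)) (Set.Ico (0:ℝ) 1) y := by
    intro y hy
    have h1 := (hG y ⟨by linarith [hy.1], hy.2⟩).const_mul α
    have h3 := ((hasDerivAt_id y).const_sub 1).log (by simp; linarith [hy.2])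
    exact (h1.add h3).hasDerivWithinAt
  have hb : ∀ y ∈ Set.Ico (0:ℝ) 1, ‖α * (√(2 * f y))⁻¹ + (-1) / (1-y)‖ ≤ M / (c * α) := by
    intro y hy
    have hy' : y ∈ Set.Icc (0:ℝ) 1 := ⟨hy.1, hy.2.le⟩
    have ht : 0 < 1 - y := by linarith [hy.2]
    have hfy := hfpos y ⟨by linarith [hy.1], hy.2⟩
    have hg0 : 0 < √(2 * f y) := Real.sqrt_pos.2 (by linarith)
    have hg2 : √(2 * f y)^2 = 2 * f y := Real.sq_sqrt (by linarith)
    have hgc : c * (1-y) ≤ √(2 * f y) := by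
      apply Real.le_sqrt_of_sq_le
      rw [mul_pow]; exact h2 y hy'
    have h1 := h y hy'
    set g := √(2 * f y)
    set t := 1 - y
    rw [← hg2, ← hα2] at h1
    have e : α * g⁻¹ + (-1)/t = -(g^2 - α^2*t^2) / (g * t * (g + α * t)) := by
      field_simp; ring
    rw [e, Real.norm_eq_abs, abs_div, abs_neg, abs_of_pos (by positivity : 0 < g * t * (g + α * t)),
      div_le_div_iff₀ (by positivity) (by positivity)]
    calc |g^2 - α^2*t^2| * (c * α) ≤ (M * t^3) * (c*α) := by gcongr
      _ = M * ((c * t) * t * (0 + α * t)) := by ring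
      _ ≤ M * (g * t * (g + α * t)) := by gcongr
  refine ⟨M/(c*α), fun y hy => ?_⟩
  have := Convex.norm_image_sub_le_of_norm_hasDerivWithin_le hder hb (convex_Ico 0 1)
    (x := 0) (y := y) (by simp) hy
  simp only [hG0, sub_zero, Real.log_one, mul_zero, add_zero, Real.norm_eq_abs] at this
  refine this.trans ?_
  rw [abs_of_nonneg hy.1]
  exact mul_le_of_le_one_right (by positivity) hy.2.le

lemma aux_profile (f : ℝ → ℝ) (hf : ContDiff ℝ (⊤ : ℕ∞) f) (hfeven : ∀ x, f (-x) = f x)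
    (hfm1 : f (-1) = 0) (hf'm1 : deriv f (-1) = 0) (hf''m1 : 0 < iteratedDeriv 2 f (-1))
    (hfpos : ∀ x ∈ Set.Ioo (-1:ℝ) 1, 0 < f x) :
    ∃ θ w : ℝ → ℝ, (∀ ρ, HasDerivAt θ (w ρ) ρ) ∧ (∀ ρ, HasDerivAt w (deriv f (θ ρ)) ρ) ∧
      (∀ ρ, w ρ = √(2 * f (θ ρ))) ∧ (∀ ρ, θ ρ ∈ Set.Ioo (-1:ℝ) 1) ∧ θ 0 = 0 ∧
      (∀ ρ, θ (-ρ) = - θ ρ) ∧ Tendsto θ atTop (nhds 1) ∧ Tendsto θ atBot (nhds (-1)) ∧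
      ∃ C > 0, ∀ ρ, 0 ≤ ρ → 0 ≤ θ ρ ∧ 1 - θ ρ ≤ C * Real.exp (-√(iteratedDeriv 2 f (-1)) * ρ) := by
  obtain ⟨M, hM, hT⟩ := aux_taylor f hf hfeven hfm1 hf'm1
  obtain ⟨c, hc, hL⟩ := aux_lower f hf.continuous _ M hf''m1 hM hfpos hT
  obtain ⟨G, hG, hG0, hGodd⟩ := aux_G f hf.continuous hfeven hfpos
  obtain ⟨B, hB⟩ := aux_Gbound f G _ M c hf''m1 hM hc hfpos hT hL hG hG0
  set α := √(iteratedDeriv 2 f (-1)) with hα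
  have hα0 : 0 < α := Real.sqrt_pos.2 hf''m1
  have hgpos : ∀ x ∈ Set.Ioo (-1:ℝ) 1, 0 < √(2 * f x) := fun x hx =>
    Real.sqrt_pos.2 (by linarith [hfpos x hx])
  have hGc : ContinuousOn G (Set.Ioo (-1:ℝ) 1) := fun x hx => (hG x hx).continuousAt.continuousWithinAt
  have hGm : StrictMonoOn G (Set.Ioo (-1:ℝ) 1) := by
    apply strictMonoOn_of_deriv_pos (convex_Ioo _ _) hGc
    intro x hx
    rw [interior_Ioo] at hx
    rw [(hG x hx).deriv]
    exact inv_pos.2 (hgpos x hx)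
  -- surjectivity
  have hpos : ∀ r : ℝ, 0 ≤ r → ∃ x ∈ Set.Ico (0:ℝ) 1, G x = r := by
    intro r hr
    set y : ℝ := 1 - Real.exp (-(|B| + α * r)) with hy
    have hBr : 0 ≤ |B| + α * r := by positivity
    have hy0 : 0 ≤ y := by
      have := Real.exp_le_one_iff.2 (neg_nonpos.2 hBr)
      linarith
    have hy1 : y < 1 := by linarith [Real.exp_pos (-(|B| + α * r))]
    have h1 := (abs_le.1 (hB y ⟨hy0, hy1⟩)).1
    have h2 : Real.log (1 - y) = -(|B| + α * r) := by
      rw [hy, sub_sub_cancel, Real.log_exp]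
    rw [h2] at h1
    have h3 : r ≤ G y := by
      have : α * r ≤ α * G y := by linarith [le_abs_self B]
      exact le_of_mul_le_mul_left this hα0
    have hsub : Set.Icc 0 y ⊆ Set.Ioo (-1:ℝ) 1 := fun z hz => ⟨by linarith [hz.1], by linarith [hz.2]⟩
    obtain ⟨x, hx, hxr⟩ := intermediate_value_Icc hy0 (hGc.mono hsub) ⟨by rw [hG0]; exact hr, h3⟩
    exact ⟨x, ⟨hx.1, by linarith [hx.2]⟩, hxr⟩
  have hsurj : G '' Set.Ioo (-1:ℝ) 1 = Set.univ := by
    rw [Set.eq_univ_iff_forall]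
    intro r
    rcases le_total 0 r with hr | hr
    · obtain ⟨x, hx, h⟩ := hpos r hr
      exact ⟨x, ⟨by linarith [hx.1], hx.2⟩, h⟩
    · obtain ⟨x, hx, h⟩ := hpos (-r) (by linarith)
      exact ⟨-x, ⟨by linarith [hx.2], by linarith [hx.1]⟩, by rw [hGodd, h, neg_neg]⟩
  let e : Set.Ioo (-1:ℝ) 1 ≃o ℝ :=
    (hGm.orderIso G _).trans ((OrderIso.setCongr _ _ hsurj).trans OrderIso.Set.univ)
  have he : ∀ x, e x = G x := fun x => rfl
  let θ : ℝ → ℝ := fun ρ => (e.symm ρ : ℝ)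
  have hmem : ∀ ρ, θ ρ ∈ Set.Ioo (-1:ℝ) 1 := fun ρ => (e.symm ρ).2
  have hGθ : ∀ ρ, G (θ ρ) = ρ := fun ρ => by
    rw [← he]; exact e.apply_symm_apply ρ
  have hθc : Continuous θ := continuous_subtype_val.comp e.symm.continuous
  have hθd : ∀ ρ, HasDerivAt θ (√(2 * f (θ ρ))) ρ := fun ρ => by
    have := HasDerivAt.of_local_left_inverse hθc.continuousAt (hG _ (hmem ρ))
      (inv_pos.2 (hgpos _ (hmem ρ))).ne' (Eventually.of_forall hGθ)
    rwa [inv_inv] at this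
  have hinj := hGm.injOn
  have hθ0 : θ 0 = 0 := hinj (hmem 0) (by norm_num) (by rw [hGθ, hG0])
  have hfd : Differentiable ℝ f := hf.differentiable (by simp)
  refine ⟨θ, fun ρ => √(2 * f (θ ρ)), hθd, fun ρ => ?_, fun ρ => rfl, hmem, hθ0, fun ρ => ?_,
    ?_, ?_, Real.exp |B|, Real.exp_pos _, fun ρ hρ => ?_⟩
  · have h1 := (((hfd (θ ρ)).hasDerivAt.comp ρ (hθd ρ)).const_mul 2).sqrt
      (by simpa using (hfpos _ (hmem ρ)).ne')
    convert! h1 using 1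
    have := hgpos _ (hmem ρ)
    simp only [Function.comp]
    field_simp
  · have hm := hmem ρ
    apply hinj (hmem _) ⟨by linarith [hm.2], by linarith [hm.1]⟩
    rw [hGθ, hGodd, hGθ]
  · exact ((tendsto_Ioo_atTop ..).1 e.symm.tendsto_atTop).mono_right nhdsWithin_le_nhds
  · exact ((tendsto_Ioo_atBot ..).1 e.symm.tendsto_atBot).mono_right nhdsWithin_le_nhds
  · have h0 : 0 ≤ θ ρ := by
      rw [← hGm.le_iff_le (by norm_num) (hmem ρ), hG0, hGθ]; exact hρ
    refine ⟨h0, ?_⟩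
    have h1 := (abs_le.1 (hB (θ ρ) ⟨h0, (hmem ρ).2⟩)).2
    rw [hGθ] at h1
    rw [← Real.exp_add, ← Real.log_le_iff_le_exp (by linarith [(hmem ρ).2])]
    linarith [le_abs_self B]

lemma aux_energy (f θ : ℝ → ℝ) (hf : ContDiff ℝ (⊤ : ℕ∞) f) (hf1 : f 1 = 0)
    (hθ : ContDiff ℝ 2 θ) (hode : ∀ ρ, deriv (deriv θ) ρ = deriv f (θ ρ))
    (hlim : Tendsto θ atTop (nhds 1)) (ρ : ℝ) : (deriv θ ρ)^2 = 2 * f (θ ρ) := by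
  have hfd : Differentiable ℝ f := hf.differentiable (by simp)
  have hd : Differentiable ℝ θ := hθ.differentiable (by simp)
  have hd2 : Differentiable ℝ (deriv θ) :=
    ((contDiff_succ_iff_deriv (n := 1)).1 hθ).2.2.differentiable (by simp)
  have hder : ∀ x, HasDerivAt (fun x => (deriv θ x)^2 - 2 * f (θ x)) 0 x := by
    intro x
    have h1 := (hd2 x).hasDerivAt.pow 2
    have h2 := ((hfd (θ x)).hasDerivAt.comp x (hd x).hasDerivAt).const_mul 2
    convert! h1.sub h2 using 1
    rw [hode]; simp; ring
  have hconst : ∀ x y, (deriv θ x)^2 - 2 * f (θ x) = (deriv θ y)^2 - 2 * f (θ y) :=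
    is_const_of_deriv_eq_zero (fun x => (hder x).differentiableAt) (fun x => (hder x).deriv)
  have hmv : ∀ n : ℕ, ∃ ξ ∈ Set.Ioo (n:ℝ) (n+1), deriv θ ξ = (θ (n+1) - θ n) / ((n + 1 : ℝ) - n) :=
    fun n => exists_deriv_eq_slope θ (by linarith) hd.continuous.continuousOn hd.differentiableOn
  choose ξ hξ hξd using hmv
  have hξt : Tendsto ξ atTop atTop :=
    tendsto_atTop_mono (fun n => (hξ n).1.le) tendsto_natCast_atTop_atTop
  have t1 : Tendsto (fun n : ℕ => θ ((n:ℝ)+1)) atTop (nhds 1) :=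
    hlim.comp (tendsto_atTop_add_const_right _ _ tendsto_natCast_atTop_atTop)
  have t2 : Tendsto (fun n : ℕ => θ (n:ℝ)) atTop (nhds 1) :=
    hlim.comp tendsto_natCast_atTop_atTop
  have t3 : Tendsto (fun n => deriv θ (ξ n)) atTop (nhds 0) := by
    have := t1.sub t2
    rw [sub_self] at this
    refine this.congr (fun n => ?_)
    rw [hξd]; simp
  have t4 : Tendsto (fun n => f (θ (ξ n))) atTop (nhds 0) := by
    rw [← hf1]
    exact (hf.continuous.tendsto 1).comp (hlim.comp hξt)
  have t5 := (t3.pow 2).sub (t4.const_mul 2)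
  have t6 : Tendsto (fun _ : ℕ => (deriv θ ρ)^2 - 2 * f (θ ρ)) atTop (nhds (0^2 - 2*0)) :=
    t5.congr (fun n => hconst _ _)
  have := tendsto_nhds_unique t6 tendsto_const_nhds
  norm_num at this
  linarith

lemma aux_unique (F a b a' b' : ℝ → ℝ) (hF : ContDiff ℝ 1 F)
    (ha : ∀ t, HasDerivAt a (a' t) t) (ha' : ∀ t, HasDerivAt a' (F (a t)) t)
    (hb : ∀ t, HasDerivAt b (b' t) t) (hb' : ∀ t, HasDerivAt b' (F (b t)) t)
    (h0 : a 0 = b 0) (h0' : a' 0 = b' 0) : a = b := by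
  funext T
  let v : ℝ × ℝ → ℝ × ℝ := fun p => (p.2, F p.1)
  have hv : ContDiff ℝ 1 v := contDiff_snd.prodMk (hF.comp contDiff_fst)
  have hda : ∀ t, HasDerivAt (fun t => (a t, a' t)) (v (a t, a' t)) t := fun t =>
    (ha t).prodMk (ha' t)
  have hdb : ∀ t, HasDerivAt (fun t => (b t, b' t)) (v (b t, b' t)) t := fun t =>
    (hb t).prodMk (hb' t)
  have hca : Continuous (fun t => (a t, a' t)) :=
    continuous_iff_continuousAt.2 fun t => (hda t).continuousAt
  have hcb : Continuous (fun t => (b t, b' t)) :=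
    continuous_iff_continuousAt.2 fun t => (hdb t).continuousAt
  set I := Set.Icc (-(|T|+1)) (|T|+1) with hI
  have hS : IsCompact ((fun t => (a t, a' t)) '' I ∪ (fun t => (b t, b' t)) '' I) :=
    (isCompact_Icc.image hca).union (isCompact_Icc.image hcb)
  obtain ⟨K, hK⟩ := (hv.locallyLipschitz.locallyLipschitzOn).exists_lipschitzOnWith_of_compact hS
  have := ODE_solution_unique_of_mem_Ioo (v := fun _ => v) (s := fun _ => _) (K := K)
    (a := -(|T|+1)) (b := |T|+1) (t₀ := 0)
    (f := (fun t => (a t, a' t))) (g := (fun t => (b t, b' t)))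
    (fun t _ => hK) ⟨by linarith [abs_nonneg T], by linarith [abs_nonneg T]⟩
    (fun t ht => ⟨hda t, Or.inl ⟨t, Set.Ioo_subset_Icc_self ht, rfl⟩⟩)
    (fun t ht => ⟨hdb t, Or.inr ⟨t, Set.Ioo_subset_Icc_self ht, rfl⟩⟩)
    (by simp [h0, h0'])
  have h := this (x := T) ⟨by linarith [neg_abs_le T], by linarith [le_abs_self T]⟩
  exact congrArg Prod.fst h

lemma aux_lip (q : ℝ → ℝ) (hq : ContDiff ℝ (⊤ : ℕ∞) q) :
    ∃ K ≥ 0, ∀ x ∈ Set.Icc (-1:ℝ) 1, ∀ y ∈ Set.Icc (-1:ℝ) 1, |q x - q y| ≤ K * |x - y| := by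
  obtain ⟨K, hK⟩ := ((contDiff_infty.1 hq 1).locallyLipschitz.locallyLipschitzOn
    ).exists_lipschitzOnWith_of_compact (isCompact_Icc (a := (-1:ℝ)) (b := 1))
  exact ⟨K, K.2, fun x hx y hy => by simpa [Real.dist_eq] using! hK.dist_le_mul x hx y hy⟩

lemma aux_form (f θ w : ℝ → ℝ) (hf : ContDiff ℝ (⊤ : ℕ∞) f)
    (hf1 : f 1 = 0) (hfm1 : f (-1) = 0) (hf'1 : deriv f 1 = 0) (hf'm1 : deriv f (-1) = 0)
    (hθ : ∀ ρ, HasDerivAt θ (w ρ) ρ) (hw : ∀ ρ, HasDerivAt w (deriv f (θ ρ)) ρ)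
    (hw2 : ∀ ρ, (w ρ)^2 = 2 * f (θ ρ)) (k : ℕ) :
    ∃ p q : ℝ → ℝ, ContDiff ℝ (⊤ : ℕ∞) p ∧ ContDiff ℝ (⊤ : ℕ∞) q ∧ q 1 = 0 ∧ q (-1) = 0 ∧
      iteratedDeriv k w = fun ρ => q (θ ρ) + p (θ ρ) * w ρ := by
  induction k with
  | zero => exact ⟨fun _ => 1, fun _ => 0, contDiff_const, contDiff_const, rfl, rfl, by simp⟩
  | succ k ih =>
    obtain ⟨p, q, hp, hq, hq1, hqm1, h⟩ := ih
    have hp' := (contDiff_infty_iff_deriv.1 hp)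
    have hq' := (contDiff_infty_iff_deriv.1 hq)
    have hf' := (contDiff_infty_iff_deriv.1 hf)
    refine ⟨deriv q, fun x => deriv p x * (2 * f x) + p x * deriv f x, hq'.2,
      (hp'.2.mul (contDiff_const.mul hf)).add (hp.mul hf'.2), by simp [hf1, hf'1],
      by simp [hfm1, hf'm1], ?_⟩
    rw [iteratedDeriv_succ, h]
    funext ρ
    have h1 := (hq'.1 (θ ρ)).hasDerivAt.comp ρ (hθ ρ)
    have h2 := ((hp'.1 (θ ρ)).hasDerivAt.comp ρ (hθ ρ)).mul (hw ρ)
    have := (h1.add h2).deriv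
    simp only [Function.comp] at this
    refine Eq.trans (by rfl) (this.trans ?_)
    simp only
    rw [← hw2]; ring

/-- Existence, uniqueness and exponential decay of the optimal profile θ₀, the unique
solution of θ₀'' = f'(θ₀) with θ₀(±∞) = ±1 and θ₀(0) = 0, for a smooth double-well
potential f. -/
theorem optimal_profile_exists_unique_decay
    (f : ℝ → ℝ)
    (hf : ContDiff ℝ (⊤ : ℕ∞) f)
    (hfeven : ∀ x, f (-x) = f x)
    (hf1 : f 1 = 0) (hfm1 : f (-1) = 0)
    (hf'1 : deriv f 1 = 0) (hf'm1 : deriv f (-1) = 0)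
    (hf''1 : 0 < iteratedDeriv 2 f 1) (hf''m1 : 0 < iteratedDeriv 2 f (-1))
    (hfpos : ∀ x ∈ Set.Ioo (-1:ℝ) 1, 0 < f x) :
    ∃ θ₀ : ℝ → ℝ,
      (ContDiff ℝ 2 θ₀ ∧ (∀ ρ, deriv (deriv θ₀) ρ = deriv f (θ₀ ρ)) ∧
        Tendsto θ₀ atTop (nhds 1) ∧ Tendsto θ₀ atBot (nhds (-1)) ∧ θ₀ 0 = 0) ∧
      (∀ θ : ℝ → ℝ,
        (ContDiff ℝ 2 θ ∧ (∀ ρ, deriv (deriv θ) ρ = deriv f (θ ρ)) ∧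
          Tendsto θ atTop (nhds 1) ∧ Tendsto θ atBot (nhds (-1)) ∧ θ 0 = 0) → θ = θ₀) ∧
      (∀ k : ℕ, ∃ C > 0,
        (∀ ρ : ℝ, 0 ≤ ρ →
          |iteratedDeriv k (fun x => θ₀ x - 1) ρ| ≤
            C * Real.exp (-(min (Real.sqrt (iteratedDeriv 2 f 1))
              (Real.sqrt (iteratedDeriv 2 f (-1)))) * |ρ|)) ∧
        (∀ ρ : ℝ, ρ ≤ 0 →
          |iteratedDeriv k (fun x => θ₀ x + 1) ρ| ≤
            C * Real.exp (-(min (Real.sqrt (iteratedDeriv 2 f 1))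
              (Real.sqrt (iteratedDeriv 2 f (-1)))) * |ρ|))) := by
  obtain ⟨θ, w, hθ, hw, hwf, hmem, hθ0, hodd, htop, hbot, C, hC, hdec⟩ :=
    aux_profile f hf hfeven hfm1 hf'm1 hf''m1 hfpos
  have hfn : ∀ ρ, 0 < f (θ ρ) := fun ρ => hfpos _ (hmem ρ)
  have hw2 : ∀ ρ, (w ρ)^2 = 2 * f (θ ρ) := fun ρ => by
    rw [hwf, Real.sq_sqrt (by linarith [hfn ρ])]
  have hw0 : ∀ ρ, 0 ≤ w ρ := fun ρ => by rw [hwf]; exact Real.sqrt_nonneg _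
  have hdθ : deriv θ = w := funext fun ρ => (hθ ρ).deriv
  have hdw : deriv w = fun ρ => deriv f (θ ρ) := funext fun ρ => (hw ρ).deriv
  have hf' := (contDiff_infty_iff_deriv.1 hf)
  have hθdiff : Differentiable ℝ θ := fun ρ => (hθ ρ).differentiableAt
  have hC2 : ContDiff ℝ 2 θ := by
    refine (contDiff_succ_iff_deriv (n := 1)).2 ⟨hθdiff, by simp, ?_⟩
    rw [hdθ]
    refine contDiff_one_iff_deriv.2 ⟨fun ρ => (hw ρ).differentiableAt, ?_⟩
    rw [hdw]
    exact hf'.2.continuous.comp hθdiff.continuous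
  refine ⟨θ, ⟨hC2, fun ρ => by rw [hdθ, hdw], htop, hbot, hθ0⟩, ?_, ?_⟩
  · rintro η ⟨hη, hode, htopη, hbotη, hη0⟩
    have hE := aux_energy f η hf hf1 hη hode htopη 0
    have hd : ∀ t, HasDerivAt η (deriv η t) t := fun t =>
      (hη.differentiable (by simp) t).hasDerivAt
    have hd2 : ∀ t, HasDerivAt (deriv η) (deriv f (η t)) t := fun t => by
      rw [← hode]
      exact (((contDiff_succ_iff_deriv (n := 1)).1 hη).2.2.differentiable (by simp) t).hasDerivAt
    have hF : ContDiff ℝ 1 (deriv f) := contDiff_infty.1 hf'.2 1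
    have h0 := hw2 0
    rw [hθ0] at h0
    rw [hη0, ← h0] at hE
    rcases sq_eq_sq_iff_eq_or_eq_neg.1 hE with h | h
    · exact aux_unique (deriv f) η θ (deriv η) w hF hd hd2 hθ hw (by rw [hη0, hθ0]) h
    · exfalso
      have hr : ∀ t, HasDerivAt (fun t => θ (-t)) (-w (-t)) t := fun t => by
        have := (hθ (-t)).comp t (hasDerivAt_neg t)
        simpa using! this
      have hr2 : ∀ t, HasDerivAt (fun t => -w (-t)) (deriv f (θ (-t))) t := fun t => by
        have := ((hw (-t)).comp t (hasDerivAt_neg t)).neg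
        simpa using! this
      have heq := aux_unique (deriv f) η (fun t => θ (-t)) (deriv η) (fun t => -w (-t)) hF hd hd2
        hr hr2 (by simp [hη0, hθ0]) (by simpa using h)
      have hl : Tendsto (fun t => θ (-t)) atTop (nhds (-1)) := hbot.comp tendsto_neg_atTop_atBot
      rw [heq] at htopη
      have := tendsto_nhds_unique htopη hl
      norm_num at this
  · set α := min (√(iteratedDeriv 2 f 1)) (√(iteratedDeriv 2 f (-1))) with hα
    have hδ : ∀ ρ, 1 - θ |ρ| ≤ C * Real.exp (-α * |ρ|) := fun ρ => by
      refine (hdec |ρ| (abs_nonneg ρ)).2.trans ?_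
      gcongr
      exact min_le_right _ _
    have hδ0 : ∀ ρ, 0 ≤ 1 - θ |ρ| := fun ρ => by linarith [(hmem |ρ|).2]
    obtain ⟨M, hM, hT⟩ := aux_taylor f hf hfeven hfm1 hf'm1
    set a := iteratedDeriv 2 f (-1) with ha
    have hfabs : ∀ ρ, f (θ ρ) = f (θ |ρ|) := fun ρ => by
      rcases abs_cases ρ with ⟨h, _⟩ | ⟨h, _⟩
      · rw [h]
      · rw [h, hodd, hfeven]
    have hwb : ∀ ρ, w ρ ≤ √(a + M) * (1 - θ |ρ|) := fun ρ => by
      have haM : 0 ≤ a + M := by linarith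
      apply le_of_sq_le_sq _ (mul_nonneg (Real.sqrt_nonneg _) (hδ0 ρ))
      rw [mul_pow, Real.sq_sqrt haM, hw2, hfabs]
      have hy0 := (hdec |ρ| (abs_nonneg ρ)).1
      have h1 := (abs_le.1 (hT (θ |ρ|) ⟨hy0, (hmem |ρ|).2.le⟩)).2
      have h2 : M * (1 - θ |ρ|)^3 ≤ M * (1 - θ |ρ|)^2 := by
        gcongr M * ?_
        exact pow_le_pow_of_le_one (hδ0 ρ) (by linarith) (by norm_num)
      linarith
    have hp1 : (1:ℝ) ∈ Set.Icc (-1:ℝ) 1 := by norm_num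
    have hm1 : (-1:ℝ) ∈ Set.Icc (-1:ℝ) 1 := by norm_num
    have hmem' : ∀ ρ, θ ρ ∈ Set.Icc (-1:ℝ) 1 := fun ρ => Set.Ioo_subset_Icc_self (hmem ρ)
    intro k
    rcases k with _ | k
    · refine ⟨C, hC, fun ρ hρ => ?_, fun ρ hρ => ?_⟩
      · have h := hδ ρ
        have h' := hδ0 ρ
        rw [iteratedDeriv_zero, abs_sub_comm]
        rw [abs_of_nonneg hρ] at h h' ⊢
        rwa [abs_of_nonneg h']
      · have h := hδ ρ
        have h' := hδ0 ρ
        rw [iteratedDeriv_zero]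
        rw [abs_of_nonpos hρ] at h h' ⊢
        rw [hodd, sub_neg_eq_add, add_comm] at h h'
        rwa [abs_of_nonneg h']
    · obtain ⟨p, q, hp, hq, hq1, hqm1, hform⟩ :=
        aux_form f θ w hf hf1 hfm1 hf'1 hf'm1 hθ hw hw2 k
      obtain ⟨K, hK, hKq⟩ := aux_lip q hq
      obtain ⟨P, hP, hPp⟩ := aux_lip p hp
      have hqb : ∀ ρ, |q (θ ρ)| ≤ K * (1 - θ |ρ|) := fun ρ => by
        rcases le_total 0 ρ with h | h
        · have := hKq _ hp1 _ (hmem' ρ)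
          rw [hq1, zero_sub, abs_neg, abs_of_nonneg (by linarith [(hmem ρ).2] : 0 ≤ 1 - θ ρ)] at this
          rwa [abs_of_nonneg h]
        · have := hKq _ (hmem' ρ) _ hm1
          rw [hqm1, sub_zero, abs_of_nonneg (by linarith [(hmem ρ).1] : 0 ≤ θ ρ - -1)] at this
          rw [abs_of_nonpos h, hodd]
          linarith
      have hpb : ∀ ρ, |p (θ ρ)| ≤ |p 1| + P * 2 := fun ρ => by
        have h1 := hPp _ (hmem' ρ) _ hp1
        have h2 : |θ ρ - 1| ≤ 2 := abs_le.2 ⟨by linarith [(hmem ρ).1], by linarith [(hmem ρ).2]⟩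
        have h3 : P * |θ ρ - 1| ≤ P * 2 := by gcongr
        have h4 := abs_sub_abs_le_abs_sub (p (θ ρ)) (p 1)
        linarith
      have hall : ∀ ρ, |iteratedDeriv k w ρ| ≤
          ((K + (|p 1| + P * 2) * √(a + M) + 1) * C) * Real.exp (-α * |ρ|) := fun ρ => by
        rw [hform]
        have hE : 0 ≤ |p 1| + P * 2 := by positivity
        calc |q (θ ρ) + p (θ ρ) * w ρ| ≤ |q (θ ρ)| + |p (θ ρ)| * w ρ := by
              refine (abs_add_le _ _).trans_eq ?_
              rw [abs_mul, abs_of_nonneg (hw0 ρ)]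
          _ ≤ K * (1 - θ |ρ|) + (|p 1| + P * 2) * (√(a + M) * (1 - θ |ρ|)) := by
              gcongr
              · exact hqb ρ
              · exact hw0 ρ
              · exact hpb ρ
              · exact hwb ρ
          _ ≤ (K + (|p 1| + P * 2) * √(a + M) + 1) * (1 - θ |ρ|) := by
              linarith [hδ0 ρ]
          _ ≤ (K + (|p 1| + P * 2) * √(a + M) + 1) * (C * Real.exp (-α * |ρ|)) := by
              gcongr
              exact hδ ρ
          _ = _ := by ring
      refine ⟨(K + (|p 1| + P * 2) * √(a + M) + 1) * C, by positivity, fun ρ _ => ?_, fun ρ _ => ?_⟩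
      · rw [iteratedDeriv_succ', show deriv (fun x => θ x - 1) = w by
          funext x; exact ((hθ x).sub_const 1).deriv]
        exact hall ρ
      · rw [iteratedDeriv_succ', show deriv (fun x => θ x + 1) = w by
          funext x; exact ((hθ x).add_const 1).deriv]
        exact hall ρ
end

section
/- Let f be a smooth double-well potential (f ∈ C^∞(ℝ), even, f(±1) = 0, f'(±1) = 0, f''(±1) > 0, f > 0 on (−1,1)) and θ₀ the optimal profile. Then θ₀ satisfies the first-integral identity θ₀'(ρ)² = 2 f(θ₀(ρ)) for all ρ ∈ ℝ, and consequently the surface tension constant σ := ∫_ℝ θ₀'(ρ)² dρ satisfies σ = ∫_{−1}^{1} √(2 f(s)) ds. -/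
open Real Filter

lemma aux_unique_s5 (f : ℝ → ℝ) (hf : ContDiff ℝ (⊤ : ℕ∞) f) (θ₀ : ℝ → ℝ)
    (hθreg : ContDiff ℝ 2 θ₀)
    (hODE : ∀ ρ, deriv (deriv θ₀) ρ = deriv f (θ₀ ρ))
    (M : ℝ) (hM : ∀ t, θ₀ t ∈ Set.Icc (-M) M) (c a : ℝ) (hc : deriv f c = 0)
    (ha : θ₀ a = c) (ha' : deriv θ₀ a = 0) (t : ℝ) : θ₀ t = c := by
  have hf1 : ContDiff ℝ 1 (deriv f) :=
    ContDiff.deriv' (n := 1) (hf.of_le (by norm_cast))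
  have hθ1 : ContDiff ℝ 1 (deriv θ₀) := ContDiff.deriv' (n := 1) (hθreg.of_le (by norm_num))
  obtain ⟨K, hK⟩ : ∃ K, LipschitzOnWith K (deriv f) (Set.Icc (-M) M) :=
    hf1.contDiffOn.exists_lipschitzOnWith one_ne_zero (convex_Icc _ _) isCompact_Icc
  let v : ℝ → ℝ × ℝ → ℝ × ℝ := fun _ p => (p.2, deriv f p.1)
  have hv : ∀ t, LipschitzOnWith (max 1 K) (v t) (Set.Icc (-M) M ×ˢ Set.univ) := by
    intro t
    have h1 : LipschitzOnWith 1 (fun p : ℝ × ℝ => p.2) (Set.Icc (-M) M ×ˢ Set.univ) :=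
      LipschitzWith.prod_snd.lipschitzOnWith
    have h2 : LipschitzOnWith (K * 1) (fun p : ℝ × ℝ => deriv f p.1)
        (Set.Icc (-M) M ×ˢ Set.univ) :=
      hK.comp LipschitzWith.prod_fst.lipschitzOnWith (fun p hp => hp.1)
    rw [mul_one] at h2
    exact h1.prodMk h2
  have key := ODE_solution_unique_univ (v := v) (s := fun _ => Set.Icc (-M) M ×ˢ Set.univ)
    (K := max 1 K) (f := fun t => (θ₀ t, deriv θ₀ t)) (g := fun _ => (c, (0:ℝ))) (t₀ := a)
    hv ?_ ?_ ?_
  · exact congrArg Prod.fst (congrFun key t)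
  · intro t
    refine ⟨?_, hM t, trivial⟩
    have h1 := ((hθreg.differentiable (by norm_num)) t).hasDerivAt
    have h2 := ((hθ1.differentiable (by norm_num)) t).hasDerivAt
    rw [hODE] at h2
    exact h1.prodMk h2
  · intro t
    refine ⟨?_, ha ▸ hM a, trivial⟩
    have := hasDerivAt_const t ((c, (0:ℝ)) : ℝ × ℝ)
    simp only [v, hc]
    exact this
  · simp [ha, ha']

/-- First-integral identity for the optimal profile: θ₀'² = 2 f(θ₀), and consequently
σ = ∫_ℝ θ₀'² dρ = ∫_{-1}^{1} √(2 f(s)) ds. -/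
theorem optimal_profile_first_integral
    (f : ℝ → ℝ)
    (hf : ContDiff ℝ (⊤ : ℕ∞) f)
    (hfeven : ∀ x, f (-x) = f x)
    (hf1 : f 1 = 0) (hfm1 : f (-1) = 0)
    (hf'1 : deriv f 1 = 0) (hf'm1 : deriv f (-1) = 0)
    (hf''1 : 0 < iteratedDeriv 2 f 1) (hf''m1 : 0 < iteratedDeriv 2 f (-1))
    (hfpos : ∀ x ∈ Set.Ioo (-1:ℝ) 1, 0 < f x)
    (θ₀ : ℝ → ℝ)
    (hθreg : ContDiff ℝ 2 θ₀)
    (hODE : ∀ ρ, deriv (deriv θ₀) ρ = deriv f (θ₀ ρ))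
    (hlimtop : Tendsto θ₀ atTop (nhds 1))
    (hlimbot : Tendsto θ₀ atBot (nhds (-1)))
    (hzero : θ₀ 0 = 0) :
    (∀ ρ : ℝ, (deriv θ₀ ρ) ^ 2 = 2 * f (θ₀ ρ)) ∧
    (∫ ρ : ℝ, (deriv θ₀ ρ) ^ 2) = ∫ s in (-1:ℝ)..1, Real.sqrt (2 * f s) := by
  have hθ1 : ContDiff ℝ 1 (deriv θ₀) := ContDiff.deriv' (n := 1) (hθreg.of_le (by norm_num))
  have hd : ∀ t, HasDerivAt θ₀ (deriv θ₀ t) t := fun t =>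
    ((hθreg.differentiable (by norm_num)) t).hasDerivAt
  have hcont : Continuous θ₀ := hθreg.continuous
  have hdd : ∀ t, HasDerivAt (deriv θ₀) (deriv f (θ₀ t)) t := fun t =>
    hODE t ▸ ((hθ1.differentiable (by norm_num)) t).hasDerivAt
  have hdf : ∀ t, HasDerivAt f (deriv f t) t := fun t =>
    ((hf.differentiable (by simp)) t).hasDerivAt
  -- energy
  have hE : ∀ t, HasDerivAt (fun t => (deriv θ₀ t)^2 - 2 * f (θ₀ t)) 0 t := by
    intro t
    have h1 := ((hdd t).pow 2).sub (((hdf (θ₀ t)).comp t (hd t)).const_mul 2)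
    refine h1.congr_deriv ?_
    simp; ring
  obtain ⟨C, hC⟩ : ∃ C, ∀ t, (deriv θ₀ t)^2 - 2 * f (θ₀ t) = C :=
    ⟨_, fun t => is_const_of_deriv_eq_zero (fun t => (hE t).differentiableAt)
      (fun t => (hE t).deriv) t 0⟩
  have hmv : ∀ n : ℕ, ∃ ξ : ℝ, (n:ℝ) < ξ ∧ deriv θ₀ ξ = θ₀ (n+1) - θ₀ n := by
    intro n
    obtain ⟨ξ, hξ, h⟩ := exists_deriv_eq_slope θ₀ (lt_add_one (n:ℝ)) hcont.continuousOn
      (fun t _ => (hd t).differentiableAt.differentiableWithinAt)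
    exact ⟨ξ, hξ.1, by rw [h]; simp⟩
  choose ξ hξ1 hξ2 using hmv
  have hξ : Tendsto ξ atTop atTop :=
    tendsto_atTop_mono (fun n => (hξ1 n).le) tendsto_natCast_atTop_atTop
  have hdlim : Tendsto (fun n => deriv θ₀ (ξ n)) atTop (nhds 0) := by
    have h1 : Tendsto (fun n : ℕ => θ₀ (n:ℝ)) atTop (nhds 1) :=
      hlimtop.comp tendsto_natCast_atTop_atTop
    have h2 : Tendsto (fun n : ℕ => θ₀ ((n:ℝ)+1)) atTop (nhds 1) :=
      hlimtop.comp (tendsto_atTop_add_const_right _ _ tendsto_natCast_atTop_atTop)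
    simp only [hξ2]
    simpa using h2.sub h1
  have hC0 : C = 0 := by
    have h1 : Tendsto (fun n => f (θ₀ (ξ n))) atTop (nhds 0) := by
      have := (hf.continuous.tendsto 1).comp (hlimtop.comp hξ)
      rwa [hf1] at this
    have h2 := (hdlim.pow 2).sub (h1.const_mul 2)
    simp only [hC] at h2
    have := tendsto_nhds_unique tendsto_const_nhds h2
    simpa using this
  have hfirst : ∀ ρ : ℝ, (deriv θ₀ ρ) ^ 2 = 2 * f (θ₀ ρ) := by
    intro ρ; have := hC ρ; linarith
  refine ⟨hfirst, ?_⟩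
  -- boundedness
  obtain ⟨M, hM⟩ : ∃ M, ∀ t, θ₀ t ∈ Set.Icc (-M) M := by
    obtain ⟨b, hb⟩ := eventually_atTop.1 (hlimtop.eventually (Icc_mem_nhds (show (0:ℝ) < 1 by norm_num) (show (1:ℝ) < 2 by norm_num)))
    obtain ⟨a, ha⟩ := eventually_atBot.1 (hlimbot.eventually (Icc_mem_nhds (show (-2:ℝ) < -1 by norm_num) (show (-1:ℝ) < 0 by norm_num)))
    obtain ⟨B, hB⟩ := (isCompact_Icc (a := a) (b := b)).exists_bound_of_continuousOn hcont.continuousOn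
    refine ⟨max 2 B, fun t => abs_le.1 ?_⟩
    rcases le_total t a with h | h
    · have := ha t h
      exact le_max_of_le_left (abs_le.2 ⟨this.1, by linarith [this.2]⟩)
    rcases le_total b t with h' | h'
    · have := hb t h'
      exact le_max_of_le_left (abs_le.2 ⟨by linarith [this.1], this.2⟩)
    · exact le_max_of_le_right (hB t ⟨h, h'⟩)
  have hne1 : ∀ t, θ₀ t ≠ 1 := by
    intro t ht
    have h0 : deriv θ₀ t = 0 := by
      have := hfirst t
      rw [ht, hf1] at this
      simpa using this
    have := aux_unique_s5 f hf θ₀ hθreg hODE M hM 1 t hf'1 ht h0 0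
    rw [hzero] at this; norm_num at this
  have hnem1 : ∀ t, θ₀ t ≠ -1 := by
    intro t ht
    have h0 : deriv θ₀ t = 0 := by
      have := hfirst t
      rw [ht, hfm1] at this
      simpa using this
    have := aux_unique_s5 f hf θ₀ hθreg hODE M hM (-1) t hf'm1 ht h0 0
    rw [hzero] at this; norm_num at this
  have hmem : ∀ t, θ₀ t ∈ Set.Ioo (-1:ℝ) 1 := by
    intro t
    constructor
    · by_contra! h
      obtain ⟨s, hs⟩ := mem_range_of_exists_le_of_exists_ge hcont ⟨t, h⟩
        ⟨0, by rw [hzero]; norm_num⟩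
      exact hnem1 s hs
    · by_contra! h
      obtain ⟨s, hs⟩ := mem_range_of_exists_le_of_exists_ge hcont 
        ⟨0, by rw [hzero]; norm_num⟩ ⟨t, h⟩
      exact hne1 s hs
  have hdne : ∀ t, deriv θ₀ t ≠ 0 := by
    intro t h
    have h1 := hfirst t
    have h2 := hfpos _ (hmem t)
    rw [h] at h1
    linarith
  have hlt : ∀ a b, a < b → θ₀ a ≠ θ₀ b := by
    intro a b hab h
    obtain ⟨c, _, hc⟩ := exists_deriv_eq_zero hab hcont.continuousOn h
    exact hdne c hc
  have hinj : Function.Injective θ₀ := by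
    intro a b h
    rcases lt_trichotomy a b with h' | h' | h'
    · exact absurd h (hlt _ _ h')
    · exact h'
    · exact absurd h.symm (hlt _ _ h')
  have himg : θ₀ '' Set.univ = Set.Ioo (-1:ℝ) 1 := by
    rw [Set.image_univ]
    ext y
    constructor
    · rintro ⟨t, rfl⟩; exact hmem t
    · intro hy
      obtain ⟨b, hb⟩ := (hlimtop.eventually (lt_mem_nhds hy.2)).exists
      obtain ⟨a, ha⟩ := (hlimbot.eventually (gt_mem_nhds hy.1)).exists
      exact mem_range_of_exists_le_of_exists_ge hcont ⟨a, ha.le⟩ ⟨b, hb.le⟩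
  have hcv := MeasureTheory.integral_image_eq_integral_abs_deriv_smul (s := Set.univ) (f := θ₀)
    (f' := deriv θ₀) MeasurableSet.univ (fun t _ => (hd t).hasDerivWithinAt) hinj.injOn
    (fun s => Real.sqrt (2 * f s))
  rw [intervalIntegral.integral_of_le (by norm_num), MeasureTheory.integral_Ioc_eq_integral_Ioo,
    ← himg, hcv, MeasureTheory.setIntegral_univ]
  congr 1
  ext t
  rw [← hfirst, Real.sqrt_sq_eq_abs, smul_eq_mul, abs_mul_abs_self, sq]
end

section
/- Let f be a smooth double-well potential (f ∈ C^∞(ℝ), even, f(±1) = 0, f'(±1) = 0, f''(±1) > 0, f > 0 on (−1,1)), θ₀ the optimal profile, σ := ∫_ℝ θ₀'(ρ)² dρ, and θ₁ the unique bounded solution of −θ₁'' + f''(θ₀)θ₁ = 1 − (2/σ)θ₀' with θ₁(0) = 0. Then the orthogonality relation ∫_ℝ θ₀'(ρ)² f'''(θ₀(ρ)) θ₁(ρ) dρ = 0 holds (since ρ ↦ f'''(θ₀(ρ)) is odd while θ₀' and θ₁ are even). -/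
open Real Filter

lemma aux_neg (g : ℝ → ℝ) (d t : ℝ) (h : HasDerivAt g d (-t)) :
    HasDerivAt (fun s => g (-s)) (-d) t := by
  have h2 := HasDerivAt.comp t h (hasDerivAt_neg t)
  exact h2.congr_deriv (by ring)

lemma aux_uniq_pos (g g' g'' : ℝ → ℝ) (h1 : ∀ t, HasDerivAt g (g' t) t)
    (h2 : ∀ t, HasDerivAt g' (g'' t) t)
    (hK : ∀ R : ℝ, ∃ K : ℝ, ∀ t, |t| ≤ R → |g'' t| ≤ K * |g t|)
    (h0 : g 0 = 0) (h0' : g' 0 = 0) : ∀ t, 0 ≤ t → g t = 0 := by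
  intro R hR
  obtain ⟨K, hK⟩ := hK R
  set L : ℝ := 1 + |K| with hL
  have hd : ∀ t, HasDerivAt (fun s => Real.exp (-L * s) * (g s ^ 2 + g' s ^ 2))
      (Real.exp (-L * t) * (2 * g t * g' t + 2 * g' t * g'' t - L * (g t ^ 2 + g' t ^ 2))) t := by
    intro t
    have he : HasDerivAt (fun s => Real.exp (-L * s)) (Real.exp (-L * t) * (-L)) t := by
      have := ((hasDerivAt_id t).const_mul (-L)).exp
      simpa using this
    have := he.mul (((h1 t).pow 2).add ((h2 t).pow 2))
    refine this.congr_deriv ?_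
    simp
    ring
  have hanti : AntitoneOn (fun s => Real.exp (-L * s) * (g s ^ 2 + g' s ^ 2)) (Set.Icc 0 R) := by
    apply antitoneOn_of_deriv_nonpos (convex_Icc 0 R)
    · exact fun t _ => (hd t).continuousAt.continuousWithinAt
    · exact fun t _ => (hd t).differentiableAt.differentiableWithinAt
    · intro t ht
      rw [interior_Icc] at ht
      rw [(hd t).deriv]
      apply mul_nonpos_of_nonneg_of_nonpos (Real.exp_pos _).le
      have hk := hK t (by rw [abs_of_pos ht.1]; exact ht.2.le)
      have hk2 : |g'' t| ≤ |K| * |g t| :=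
        hk.trans (mul_le_mul_of_nonneg_right (le_abs_self K) (abs_nonneg _))
      have e1 : g' t * g'' t ≤ |g' t| * (|K| * |g t|) :=
        (le_abs_self _).trans (by rw [abs_mul]; gcongr)
      have e2 : 2 * (|g' t| * |g t|) ≤ g t ^ 2 + g' t ^ 2 := by
        nlinarith [sq_nonneg (|g' t| - |g t|), sq_abs (g t), sq_abs (g' t)]
      nlinarith [sq_nonneg (g t - g' t), mul_le_mul_of_nonneg_left e2 (abs_nonneg K)]
  have := hanti (Set.left_mem_Icc.2 hR) (Set.right_mem_Icc.2 hR) hR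
  simp only [h0, h0'] at this
  have hp := Real.exp_pos (-L * R)
  have h3 : g R ^ 2 + g' R ^ 2 ≤ 0 := by
    by_contra hc
    push Not at hc
    have := mul_pos hp hc
    norm_num at *
    linarith
  have : g R ^ 2 = 0 := by nlinarith [sq_nonneg (g R), sq_nonneg (g' R)]
  exact pow_eq_zero_iff (two_ne_zero) |>.1 this

lemma aux_uniq (g g' g'' : ℝ → ℝ) (h1 : ∀ t, HasDerivAt g (g' t) t)
    (h2 : ∀ t, HasDerivAt g' (g'' t) t)
    (hK : ∀ R : ℝ, ∃ K : ℝ, ∀ t, |t| ≤ R → |g'' t| ≤ K * |g t|)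
    (h0 : g 0 = 0) (h0' : g' 0 = 0) : ∀ t, g t = 0 := by
  intro t
  rcases le_total 0 t with ht | ht
  · exact aux_uniq_pos g g' g'' h1 h2 hK h0 h0' t ht
  · have := aux_uniq_pos (fun s => g (-s)) (fun s => - g' (-s)) (fun s => g'' (-s))
      (fun s => aux_neg _ _ _ (h1 (-s)))
      (fun s => ((aux_neg _ _ _ (h2 (-s))).neg).congr_deriv (by ring))
      (fun R => by
        obtain ⟨K, hK⟩ := hK R
        exact ⟨K, fun s hs => hK (-s) (by simpa using hs)⟩)
      (by simpa using h0) (by simpa using h0') (-t) (by linarith)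
    simpa using this

lemma aux_mvt (g g' : ℝ → ℝ) (h1 : ∀ t, HasDerivAt g (g' t) t) :
    ∃ ξ : ℕ → ℝ, Tendsto ξ atTop atTop ∧ ∀ n : ℕ, g' (ξ n) = g ((n:ℝ) + 1) - g n := by
  have : ∀ n : ℕ, ∃ c ∈ Set.Ioo (n:ℝ) (n+1), g' c = g ((n:ℝ) + 1) - g n := by
    intro n
    obtain ⟨c, hc, h⟩ := exists_hasDerivAt_eq_slope g g' (by linarith : (n:ℝ) < n + 1)
      (fun t _ => (h1 t).continuousAt.continuousWithinAt) (fun t _ => h1 t)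
    exact ⟨c, hc, by rw [h]; simp⟩
  choose ξ hξ h using this
  exact ⟨ξ, tendsto_atTop_mono (fun n => (hξ n).1.le) tendsto_natCast_atTop_atTop, h⟩

lemma aux_const (g : ℝ → ℝ) (h : ∀ t, HasDerivAt g 0 t) (x y : ℝ) : g x = g y :=
  is_const_of_deriv_eq_zero (fun t => (h t).differentiableAt) (fun t => (h t).deriv) x y

/-- Orthogonality relation ∫_ℝ θ₀'² f'''(θ₀) θ₁ dρ = 0 for the optimal profile θ₀ and
the bounded solution θ₁ of -θ₁'' + f''(θ₀)θ₁ = 1 - (2/σ)θ₀' with θ₁(0) = 0. -/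
theorem theta_one_orthogonality
    (f : ℝ → ℝ)
    (hf : ContDiff ℝ (⊤ : ℕ∞) f)
    (hfeven : ∀ x, f (-x) = f x)
    (hf1 : f 1 = 0) (hfm1 : f (-1) = 0)
    (hf'1 : deriv f 1 = 0) (hf'm1 : deriv f (-1) = 0)
    (hf''1 : 0 < iteratedDeriv 2 f 1) (hf''m1 : 0 < iteratedDeriv 2 f (-1))
    (hfpos : ∀ x ∈ Set.Ioo (-1:ℝ) 1, 0 < f x)
    (θ₀ : ℝ → ℝ)
    (hθreg : ContDiff ℝ 2 θ₀)
    (hODE : ∀ ρ, deriv (deriv θ₀) ρ = deriv f (θ₀ ρ))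
    (hlimtop : Tendsto θ₀ atTop (nhds 1))
    (hlimbot : Tendsto θ₀ atBot (nhds (-1)))
    (hzero : θ₀ 0 = 0)
    (σ : ℝ) (hσ : σ = ∫ ρ : ℝ, (deriv θ₀ ρ) ^ 2)
    (θ₁ : ℝ → ℝ)
    (hθ₁reg : ContDiff ℝ 2 θ₁)
    (hθ₁bdd : ∃ C : ℝ, ∀ ρ, |θ₁ ρ| ≤ C)
    (hθ₁eq : ∀ ρ, -deriv (deriv θ₁) ρ + iteratedDeriv 2 f (θ₀ ρ) * θ₁ ρ
        = 1 - (2 / σ) * deriv θ₀ ρ)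
    (hθ₁zero : θ₁ 0 = 0) :
    (∫ ρ : ℝ, (deriv θ₀ ρ) ^ 2 * iteratedDeriv 3 f (θ₀ ρ) * θ₁ ρ) = 0 := by
  -- basic derivatives
  have key : ∀ g : ℝ → ℝ, ContDiff ℝ 2 g → (∀ t, HasDerivAt g (deriv g t) t) ∧
      (∀ t, HasDerivAt (deriv g) (deriv (deriv g) t) t) := by
    intro g hg
    refine ⟨fun t => (hg.differentiable (by norm_num) t).hasDerivAt, fun t => ?_⟩
    have : ContDiff ℝ 1 (deriv g) := by
      have h2 : ContDiff ℝ (1 + 1) g := by simpa [one_add_one_eq_two] using hg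
      exact (contDiff_succ_iff_deriv.1 h2).2.2
    exact (this.differentiable (by norm_num) t).hasDerivAt
  have hf2 : ContDiff ℝ 2 f := hf.of_le (by exact WithTop.coe_le_coe.2 le_top)
  obtain ⟨f1, f2⟩ := key f hf2
  obtain ⟨a1, a2⟩ := key θ₀ hθreg
  obtain ⟨b1, b2⟩ := key θ₁ hθ₁reg
  have i2 : iteratedDeriv 2 f = deriv (deriv f) := by
    rw [iteratedDeriv_succ, iteratedDeriv_one]
  have f2cont : Continuous (deriv (deriv f)) := by
    rw [← i2]; exact hf.continuous_iteratedDeriv 2 (by exact WithTop.coe_le_coe.2 le_top)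
  simp only [hODE] at a2
  have hfe : (fun x => f (-x)) = f := funext hfeven
  have par : ∀ (n : ℕ) x, iteratedDeriv n f (-x) = (-1) ^ n * iteratedDeriv n f x := by
    intro n x
    have h := iteratedDeriv_comp_neg n f x
    rw [hfe] at h
    rw [h, smul_eq_mul, ← mul_assoc, ← mul_pow]; simp
  have fodd : ∀ x, deriv f (-x) = - deriv f x := by
    intro x; have := par 1 x; simpa [iteratedDeriv_one] using this
  -- energy
  have hfθ : Tendsto (fun t => f (θ₀ t)) atTop (nhds 0) := by
    have := (hf.continuous.tendsto 1).comp hlimtop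
    rwa [hf1] at this
  have hE : ∀ x, deriv θ₀ x ^ 2 = 2 * f (θ₀ x) := by
    have hc := aux_const (fun t => deriv θ₀ t ^ 2 - 2 * f (θ₀ t)) (fun t => by
      have := ((a2 t).pow 2).sub (((f1 (θ₀ t)).comp t (a1 t)).const_mul 2)
      refine this.congr_deriv ?_
      simp; ring)
    intro x
    obtain ⟨ξ, hξ, hm⟩ := aux_mvt θ₀ _ a1
    have hd : Tendsto (fun n => deriv θ₀ (ξ n)) atTop (nhds 0) := by
      simp only [hm]
      have t1 := hlimtop.comp (tendsto_natCast_atTop_atTop (R := ℝ))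
      have t2 := hlimtop.comp (tendsto_atTop_add_const_right _ (1:ℝ) (tendsto_natCast_atTop_atTop (R := ℝ)))
      simpa using t2.sub t1
    have hl := (hd.pow 2).sub ((hfθ.comp hξ).const_mul 2)
    have hconst : Tendsto (fun n : ℕ => deriv θ₀ x ^ 2 - 2 * f (θ₀ x)) atTop (nhds 0) := by
      have e : (fun n : ℕ => deriv θ₀ x ^ 2 - 2 * f (θ₀ x)) =
          fun n => deriv θ₀ (ξ n) ^ 2 - 2 * ((fun t => f (θ₀ t)) ∘ ξ) n :=
        funext fun n => hc x (ξ n)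
      rw [e]; simpa using hl
    have := tendsto_nhds_unique hconst tendsto_const_nhds
    linarith
  have hu0 : deriv θ₀ 0 ≠ 0 := by
    intro h
    have h1 := hE 0
    have h2 := hfpos 0 (by norm_num)
    rw [h, hzero] at h1
    linarith
  have hu : Tendsto (deriv θ₀) atTop (nhds 0) := by
    rw [tendsto_zero_iff_abs_tendsto_zero]
    have h := (hfθ.const_mul 2).sqrt
    simp only [← hE, Real.sqrt_sq_eq_abs] at h
    simpa [Function.comp_def] using h
  -- oddness of θ₀
  have odd0 : ∀ t, θ₀ (-t) = - θ₀ t := by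
    have := aux_uniq (fun t => θ₀ t + θ₀ (-t)) (fun t => deriv θ₀ t - deriv θ₀ (-t))
      (fun t => deriv f (θ₀ t) + deriv f (θ₀ (-t)))
      (fun t => by
        have := (a1 t).add (aux_neg _ _ _ (a1 (-t)))
        refine this.congr_deriv ?_
        ring)
      (fun t => by
        have := (a2 t).sub (aux_neg _ _ _ (a2 (-t)))
        refine this.congr_deriv ?_
        simp)
      (fun R => by
        obtain ⟨M, hM⟩ := (isCompact_Icc (a := -R) (b := R)).exists_bound_of_continuousOn
          hθreg.continuous.continuousOn
        obtain ⟨K, hK⟩ := (isCompact_Icc (a := -M) (b := M)).exists_bound_of_continuousOn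
          f2cont.continuousOn
        refine ⟨K, fun t ht => ?_⟩
        have ht' := abs_le.1 ht
        have m1 := abs_le.1 (hM t ⟨ht'.1, ht'.2⟩)
        have m2 := abs_le.1 (hM (-t) ⟨by linarith, by linarith⟩)
        have := (convex_Icc (-M) M).norm_image_sub_le_of_norm_deriv_le (f := deriv f)
          (fun x _ => (f2 x).differentiableAt) hK
          (x := - θ₀ (-t)) (y := θ₀ t) ⟨by linarith, by linarith⟩ ⟨m1.1, m1.2⟩
        simpa [fodd] using this)
      (by simp [hzero]) (by simp)
    intro t
    linarith [this t]
  have even0 : ∀ t, deriv θ₀ (-t) = deriv θ₀ t := by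
    intro t
    have h1 : HasDerivAt (fun s => θ₀ (-s)) (- deriv θ₀ (-t)) t := by
      exact aux_neg _ _ _ (a1 (-t))
    rw [funext odd0] at h1
    have := h1.unique (a1 t).neg
    linarith
  -- evenness of θ₁
  obtain ⟨C, hC⟩ := hθ₁bdd
  let w : ℝ → ℝ := fun t => θ₁ t - θ₁ (-t)
  let w' : ℝ → ℝ := fun t => deriv θ₁ t + deriv θ₁ (-t)
  have w1 : ∀ t, HasDerivAt w (w' t) t := fun t => by
    have := (b1 t).sub (aux_neg _ _ _ (b1 (-t)))
    refine this.congr_deriv ?_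
    simp [w']
  have w2 : ∀ t, HasDerivAt w' (deriv (deriv f) (θ₀ t) * w t) t := fun t => by
    have := (b2 t).add (aux_neg _ _ _ (b2 (-t)))
    refine this.congr_deriv ?_
    have e1 := hθ₁eq t
    have e2 := hθ₁eq (-t)
    rw [odd0, even0, par 2, i2] at e2
    rw [i2] at e1
    simp [w]
    linarith
  have wb : ∀ t, |w t| ≤ 2 * C := fun t => by
    have := abs_sub (θ₁ t) (θ₁ (-t))
    have := hC t
    have := hC (-t)
    simp only [w]
    linarith
  have hw0 : w 0 = 0 := by simp [w]
  have hw'0 : w' 0 = 0 := by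
    have hc := aux_const (fun t => w' t * deriv θ₀ t - w t * deriv f (θ₀ t)) (fun t => by
      have := ((w2 t).mul (a2 t)).sub ((w1 t).mul ((f2 (θ₀ t)).comp t (a1 t)))
      refine this.congr_deriv ?_
      simp; ring)
    obtain ⟨ξ, hξ, hm⟩ := aux_mvt w _ w1
    have hd : ∀ n, |w' (ξ n)| ≤ 4 * C := fun n => by
      rw [hm]
      have := abs_sub (w ((n:ℝ)+1)) (w n)
      linarith [wb n, wb ((n:ℝ)+1)]
    have t1 : Tendsto (fun n => w' (ξ n) * deriv θ₀ (ξ n)) atTop (nhds 0) :=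
      bdd_le_mul_tendsto_zero' (4 * C) (Eventually.of_forall hd) (hu.comp hξ)
    have hf'θ : Tendsto (fun t => deriv f (θ₀ t)) atTop (nhds 0) := by
      have := ((f2 1).continuousAt.tendsto).comp hlimtop
      rwa [hf'1] at this
    have t2 : Tendsto (fun n => w (ξ n) * deriv f (θ₀ (ξ n))) atTop (nhds 0) :=
      bdd_le_mul_tendsto_zero' (2 * C) (Eventually.of_forall fun n => wb _) (hf'θ.comp hξ)
    have t3 := t1.sub t2
    have e : (fun n => w' (ξ n) * deriv θ₀ (ξ n) - w (ξ n) * deriv f (θ₀ (ξ n))) =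
        fun _ : ℕ => w' 0 * deriv θ₀ 0 - w 0 * deriv f (θ₀ 0) := funext fun n => hc (ξ n) 0
    rw [e] at t3
    have := tendsto_nhds_unique t3 tendsto_const_nhds
    rw [hw0] at this
    have h : w' 0 * deriv θ₀ 0 = 0 := by linarith
    exact (mul_eq_zero.1 h).resolve_right hu0
  have hw := aux_uniq w w' _ w1 w2 (fun R => by
    obtain ⟨K, hK⟩ := (isCompact_Icc (a := -R) (b := R)).exists_bound_of_continuousOn
      (f2cont.comp hθreg.continuous).continuousOn
    refine ⟨K, fun t ht => ?_⟩
    rw [abs_mul]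
    exact mul_le_mul_of_nonneg_right (hK t (abs_le.1 ht)) (abs_nonneg _)) hw0 hw'0
  have even1 : ∀ t, θ₁ (-t) = θ₁ t := fun t => by
    have := hw t
    simp only [w] at this
    linarith
  have hfin := MeasureTheory.integral_neg_eq_self
    (fun ρ : ℝ => (deriv θ₀ ρ) ^ 2 * iteratedDeriv 3 f (θ₀ ρ) * θ₁ ρ) MeasureTheory.volume
  have e : ∀ ρ : ℝ, (deriv θ₀ (-ρ)) ^ 2 * iteratedDeriv 3 f (θ₀ (-ρ)) * θ₁ (-ρ) =
      -((deriv θ₀ ρ) ^ 2 * iteratedDeriv 3 f (θ₀ ρ) * θ₁ ρ) := fun ρ => by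
    rw [even0, odd0, even1, par 3]; ring
  simp only [e] at hfin
  rw [MeasureTheory.integral_neg] at hfin
  linarith
end

section
/- (Localized diffuse-interface integral estimate, in coordinates.) Let f ∈ S(ℝ) be a Schwartz function, δ > 0, M > 0, and let ζ ∈ C^∞(ℝ) satisfy ζ(z) = 1 for |z| ≤ δ and ζ(z) = 0 for |z| ≥ 2δ. Then there is C > 0 such that for every measurable h : 𝕋¹ → ℝ with sup_{s} |h(s)| ≤ M, every measurable J₁ : (−2δ,2δ) × 𝕋¹ → ℝ with |J₁| ≤ M, every a ∈ L¹(𝕋¹), and every ε ∈ (0,1]: | ∫_{−2δ}^{2δ} ∫_{𝕋¹} ζ(r) f'( r/ε − h(s) ) a(s) ( 1 + r J₁(r,s) ) ds dr | ≤ C ε² ‖a‖_{L¹(𝕋¹)}. -/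
open MeasureTheory Set

lemma aux_decay (g : SchwartzMap ℝ ℝ) (M : ℝ) (hM : 0 < M) (n : ℕ) :
    ∃ G > 0, ∀ y η : ℝ, |η| ≤ M → |y|^n * |g (y - η)| ≤ G := by
  obtain ⟨D, hD, hD'⟩ := g.decay n 0
  obtain ⟨E, hE, hE'⟩ := g.decay 0 0
  refine ⟨2^(n-1) * (D + M^n * E), by positivity, fun y η hη => ?_⟩
  have h1 := hD' (y - η)
  have h2 := hE' (y - η)
  simp only [norm_iteratedFDeriv_zero, Real.norm_eq_abs, pow_zero, one_mul] at h1 h2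
  have h3 : |y| ≤ |y - η| + M := by
    have := abs_add_le (y - η) η
    simp only [sub_add_cancel] at this
    linarith
  have h4 : |y|^n ≤ 2^(n-1) * (|y-η|^n + M^n) :=
    (pow_le_pow_left₀ (abs_nonneg _) h3 n).trans (add_pow_le (abs_nonneg _) hM.le n)
  calc |y|^n * |g (y - η)| ≤ 2^(n-1) * (|y-η|^n + M^n) * |g (y - η)| := by gcongr
    _ = 2^(n-1) * (|y-η|^n * |g (y - η)| + M^n * |g (y - η)|) := by ring
    _ ≤ _ := by gcongr

lemma aux_bdd (φ : ℝ → ℝ) (hφ : Continuous φ) (R : ℝ) :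
    ∃ B > 0, ∀ r ∈ Icc (-R) R, |φ r| ≤ B := by
  obtain ⟨B, hB⟩ := isCompact_Icc.exists_bound_of_continuousOn (s := Icc (-R) R) hφ.continuousOn
  exact ⟨max B 1, by positivity, fun r hr => (hB r hr).trans (le_max_left _ _)⟩

lemma aux_inner
    (f : SchwartzMap ℝ ℝ) (δ M : ℝ) (hδ : 0 < δ) (hM : 0 < M)
    (ζ : ℝ → ℝ) (hζ : ContDiff ℝ (⊤ : ℕ∞) ζ)
    (hζ1 : ∀ z : ℝ, |z| ≤ δ → ζ z = 1)
    (hζ0 : ∀ z : ℝ, 2*δ ≤ |z| → ζ z = 0) :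
    ∃ C > 0, ∀ η : ℝ, |η| ≤ M → ∀ J : ℝ → ℝ, Measurable J →
      (∀ r ∈ Ioo (-(2*δ)) (2*δ), |J r| ≤ M) → ∀ ε : ℝ, ε ∈ Ioc (0:ℝ) 1 →
      |∫ r in Ioo (-(2*δ)) (2*δ), ζ r * deriv f (r/ε - η) * (1 + r * J r)| ≤ C * ε^2 := by
  set g : SchwartzMap ℝ ℝ := SchwartzMap.derivCLM ℝ ℝ f with hg
  have hgf : ∀ x, deriv f x = g x := fun x => by simp [hg]
  have hζd : Differentiable ℝ ζ := hζ.differentiable (by simp)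
  have hζc : Continuous (deriv ζ) := hζ.continuous_deriv (by simp)
  obtain ⟨Z, hZ, hZ'⟩ := aux_bdd ζ hζ.continuous (2*δ)
  obtain ⟨B, hB, hB'⟩ := aux_bdd (deriv ζ) hζc (2*δ)
  obtain ⟨F1, hF1, hF1'⟩ := aux_decay f M hM 1
  obtain ⟨G1, hG1, hG1'⟩ := aux_decay g M hM 1
  obtain ⟨G3, hG3, hG3'⟩ := aux_decay g M hM 3
  refine ⟨B / δ * F1 * (4*δ) + Z * M * (G1+G3) * Real.pi, by positivity, ?_⟩
  intro η hη J hJm hJ ε ⟨hε, hε1⟩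
  have hgc : Continuous fun r : ℝ => g (r/ε - η) := by fun_prop
  have hfc : Continuous fun r : ℝ => f (r/ε - η) := by fun_prop
  -- first part
  have hK1 : |∫ r in Ioo (-(2*δ)) (2*δ), ζ r * g (r/ε - η)| ≤ B / δ * F1 * (4*δ) * ε^2 := by
    have hle : -(2*δ) ≤ 2*δ := by linarith
    rw [← integral_Ioc_eq_integral_Ioo, ← intervalIntegral.integral_of_le hle]
    have hv : ∀ x ∈ uIcc (-(2*δ)) (2*δ),
        HasDerivAt (fun r => ε * f (r/ε - η)) (g (x/ε - η)) x := by
      intro x _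
      have h1 : HasDerivAt f (g (x/ε - η)) (x/ε - η) := by
        rw [← hgf]; exact f.differentiable.differentiableAt.hasDerivAt
      have h2 : HasDerivAt (fun r : ℝ => r/ε - η) (1/ε) x :=
        ((hasDerivAt_id x).div_const ε).sub_const η
      have h3 := (h1.comp x h2).const_mul ε
      have := hε.ne'
      rw [mul_left_comm, mul_one_div_cancel this, mul_one] at h3
      exact h3
    rw [intervalIntegral.integral_mul_deriv_eq_deriv_mul
      (fun x _ => (hζd x).hasDerivAt) hv (hζc.intervalIntegrable _ _) (hgc.intervalIntegrable _ _)]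
    rw [hζ0 (2*δ) (le_abs_self _), hζ0 (-(2*δ)) (by rw [abs_neg]; exact le_abs_self _)]
    simp only [zero_mul, sub_zero, zero_sub, abs_neg]
    have := intervalIntegral.norm_integral_le_of_norm_le_const (a := -(2*δ)) (b := 2*δ)
      (f := fun x => deriv ζ x * (ε * f (x/ε - η))) (C := B / δ * F1 * ε^2) ?_
    · rw [Real.norm_eq_abs] at this
      refine this.trans (le_of_eq ?_)
      rw [abs_of_nonneg (by linarith)]; ring
    · intro x hx
      rw [uIoc_of_le hle] at hx
      have hd : |deriv ζ x| ≤ B / δ * |x| := by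
        by_cases hxd : |x| < δ
        · have : ζ =ᶠ[nhds x] fun _ => 1 := by
            filter_upwards [(isOpen_lt continuous_abs continuous_const).mem_nhds hxd] with z hz
            exact hζ1 z (le_of_lt hz)
          rw [this.deriv_eq]; simp; positivity
        · push Not at hxd
          calc |deriv ζ x| ≤ B := hB' x ⟨hx.1.le, hx.2⟩
            _ = B / δ * δ := by field_simp
            _ ≤ _ := by gcongr
      have h1 := hF1' (x/ε) η hη
      rw [pow_one, abs_div, abs_of_pos hε] at h1
      rw [Real.norm_eq_abs, abs_mul, abs_mul, abs_of_pos hε]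
      calc _ ≤ B / δ * |x| * (ε * |f (x/ε - η)|) := by gcongr
        _ = B / δ * ε^2 * (|x|/ε * |f (x/ε - η)|) := by field_simp
        _ ≤ B / δ * ε^2 * F1 := by gcongr
        _ = _ := by ring
  have hI : IntegrableOn (fun r => ζ r * g (r/ε - η)) (Ioo (-(2*δ)) (2*δ)) :=
    ((hζ.continuous.mul hgc).integrableOn_Icc (a := -(2*δ)) (b := 2*δ)).mono_set Ioo_subset_Icc_self
  have hint : Integrable (fun r : ℝ => Z * M * (G1+G3) * ε * (1 + (r/ε)^2)⁻¹) :=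
    (integrable_inv_one_add_sq.comp_div hε.ne').const_mul _
  have hpt : ∀ r ∈ Ioo (-(2*δ)) (2*δ), ‖ζ r * g (r/ε - η) * (r * J r)‖ ≤
      Z * M * (G1+G3) * ε * (1 + (r/ε)^2)⁻¹ := by
    intro r hr
    have h1 := hG1' (r/ε) η hη
    have h3 := hG3' (r/ε) η hη
    have hz := hZ' r ⟨hr.1.le, hr.2.le⟩
    have hj := hJ r hr
    have e : r = ε * (r/ε) := by field_simp
    have h5 : |r/ε| * |g (r/ε - η)| ≤ (G1+G3) * (1 + (r/ε)^2)⁻¹ := by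
      rw [← div_eq_mul_inv, le_div_iff₀ (by positivity), ← sq_abs (r/ε)]
      nlinarith
    rw [Real.norm_eq_abs, abs_mul, abs_mul, abs_mul]
    have e2 : |r| = ε * |r/ε| := by rw [abs_div, abs_of_pos hε]; field_simp
    rw [e2]
    calc |ζ r| * |g (r/ε - η)| * (ε * |r/ε| * |J r|)
        ≤ Z * |g (r/ε - η)| * (ε * |r/ε| * M) := by gcongr
      _ = Z * M * ε * (|r/ε| * |g (r/ε - η)|) := by ring
      _ ≤ Z * M * ε * ((G1+G3) * (1 + (r/ε)^2)⁻¹) := by gcongr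
      _ = _ := by ring
  have hae : ∀ᵐ r ∂(volume.restrict (Ioo (-(2*δ)) (2*δ))), ‖ζ r * g (r/ε - η) * (r * J r)‖ ≤
      Z * M * (G1+G3) * ε * (1 + (r/ε)^2)⁻¹ :=
    (ae_restrict_iff' measurableSet_Ioo).2 (Filter.Eventually.of_forall hpt)
  have hI2 : IntegrableOn (fun r => ζ r * g (r/ε - η) * (r * J r)) (Ioo (-(2*δ)) (2*δ)) := by
    refine Integrable.mono' hint.integrableOn ?_ hae
    exact ((hζ.continuous.mul hgc).measurable.mul (measurable_id.mul hJm)).aestronglyMeasurable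
  have hK2 : |∫ r in Ioo (-(2*δ)) (2*δ), ζ r * g (r/ε - η) * (r * J r)| ≤
      Z * M * (G1+G3) * Real.pi * ε^2 := by
    calc _ ≤ ∫ r in Ioo (-(2*δ)) (2*δ), Z * M * (G1+G3) * ε * (1 + (r/ε)^2)⁻¹ :=
          norm_integral_le_of_norm_le hint.integrableOn hae
      _ ≤ ∫ r : ℝ, Z * M * (G1+G3) * ε * (1 + (r/ε)^2)⁻¹ :=
          setIntegral_le_integral hint (Filter.Eventually.of_forall fun r => by
            simp only [Pi.zero_apply]; positivity)
      _ = _ := by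
          rw [integral_const_mul, Measure.integral_comp_div (fun x : ℝ => (1 + x^2)⁻¹) ε,
            integral_univ_inv_one_add_sq, abs_of_pos hε, smul_eq_mul]
          ring
  have hsplit : ∫ r in Ioo (-(2*δ)) (2*δ), ζ r * deriv f (r/ε - η) * (1 + r * J r) =
      (∫ r in Ioo (-(2*δ)) (2*δ), ζ r * g (r/ε - η)) +
      ∫ r in Ioo (-(2*δ)) (2*δ), ζ r * g (r/ε - η) * (r * J r) := by
    rw [← integral_add hI hI2]
    congr 1; ext r; rw [hgf]; ring
  rw [hsplit]
  refine (abs_add_le _ _).trans ?_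
  linarith



/-- Localized diffuse-interface integral estimate, in coordinates: for a Schwartz
function f, a cut-off ζ, a bounded height h, a bounded Jacobian correction J₁ and
a ∈ L¹(𝕋¹), the localized integral of ζ(r) f'(r/ε - h(s)) a(s) (1 + r J₁(r,s)) is
bounded by C ε² ‖a‖_{L¹}. -/
theorem localized_interface_integral_estimate
    (f : SchwartzMap ℝ ℝ) (δ M : ℝ) (hδ : 0 < δ) (hM : 0 < M)
    (ζ : ℝ → ℝ) (hζ : ContDiff ℝ (⊤ : ℕ∞) ζ)
    (hζ1 : ∀ z : ℝ, |z| ≤ δ → ζ z = 1)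
    (hζ0 : ∀ z : ℝ, 2*δ ≤ |z| → ζ z = 0) :
    ∃ C > 0, ∀ (h : AddCircle (1:ℝ) → ℝ), Measurable h → (∀ s, |h s| ≤ M) →
      ∀ (J₁ : ℝ × AddCircle (1:ℝ) → ℝ), Measurable J₁ →
        (∀ r ∈ Ioo (-(2*δ)) (2*δ), ∀ s, |J₁ (r, s)| ≤ M) →
      ∀ (a : AddCircle (1:ℝ) → ℝ), Integrable a →
      ∀ ε : ℝ, ε ∈ Ioc (0:ℝ) 1 →
      |∫ r in Ioo (-(2*δ)) (2*δ), ∫ s : AddCircle (1:ℝ),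
          ζ r * deriv f (r/ε - h s) * a s * (1 + r * J₁ (r, s))|
        ≤ C * ε^2 * ∫ s : AddCircle (1:ℝ), |a s| := by
  obtain ⟨C, hC, hCb⟩ := aux_inner f δ M hδ hM ζ hζ hζ1 hζ0
  refine ⟨C, hC, ?_⟩
  intro h hhm hh J₁ hJm hJ a ha ε hε
  haveI : Fact ((0:ℝ) < 1) := ⟨one_pos⟩
  set g : SchwartzMap ℝ ℝ := SchwartzMap.derivCLM ℝ ℝ f with hg
  have hgf : ∀ x, deriv f x = g x := fun x => by simp [hg]
  obtain ⟨Z, hZ, hZ'⟩ := aux_bdd ζ hζ.continuous (2*δ)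
  obtain ⟨G, hG, hG'⟩ := aux_decay g M hM 0
  have hprod : Integrable (fun p : ℝ × AddCircle (1:ℝ) =>
      ζ p.1 * deriv f (p.1/ε - h p.2) * a p.2 * (1 + p.1 * J₁ (p.1, p.2)))
      ((volume.restrict (Ioo (-(2*δ)) (2*δ))).prod volume) := by
    have h0 : Integrable (fun p : ℝ × AddCircle (1:ℝ) => (1:ℝ) * a p.2)
      ((volume.restrict (Ioo (-(2*δ)) (2*δ))).prod volume) :=
      Integrable.mul_prod (f := fun _ : ℝ => (1:ℝ)) (integrable_const 1) ha
    have hm : Measurable (fun p : ℝ × AddCircle (1:ℝ) =>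
        ζ p.1 * g (p.1/ε - h p.2) * (1 + p.1 * J₁ (p.1, p.2))) := by
      have := hζ.continuous.measurable
      have := g.continuous.measurable
      fun_prop
    have hmem : ∀ᵐ p ∂((volume.restrict (Ioo (-(2*δ)) (2*δ))).prod
        (volume : Measure (AddCircle (1:ℝ)))), p.1 ∈ Ioo (-(2*δ)) (2*δ) :=
      Measure.quasiMeasurePreserving_fst.ae (ae_restrict_mem measurableSet_Ioo)
    have hb : ∀ᵐ p ∂((volume.restrict (Ioo (-(2*δ)) (2*δ))).prod
        (volume : Measure (AddCircle (1:ℝ)))),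
        ‖ζ p.1 * g (p.1/ε - h p.2) * (1 + p.1 * J₁ (p.1, p.2))‖ ≤ Z * G * (1 + 2*δ*M) := by
      filter_upwards [hmem] with p hp
      have h1 := hZ' p.1 ⟨hp.1.le, hp.2.le⟩
      have h2 := hG' (p.1/ε) (h p.2) (hh _)
      rw [pow_zero, one_mul] at h2
      have h3 := hJ p.1 hp p.2
      have h4 : |p.1| ≤ 2*δ := abs_le.2 ⟨hp.1.le, hp.2.le⟩
      rw [Real.norm_eq_abs, abs_mul, abs_mul]
      have h5 : |1 + p.1 * J₁ (p.1, p.2)| ≤ 1 + 2*δ*M := by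
        refine (abs_add_le _ _).trans ?_
        rw [abs_one, abs_mul]
        gcongr
      gcongr
    refine (h0.bdd_mul hm.aestronglyMeasurable hb).congr (Filter.Eventually.of_forall fun p => ?_)
    simp only [hgf]; ring
  rw [integral_integral_swap hprod]
  rw [← Real.norm_eq_abs, ← integral_const_mul]
  refine norm_integral_le_of_norm_le (ha.abs.const_mul _) (Filter.Eventually.of_forall fun s => ?_)
  have hk := hCb (h s) (hh s) (fun r => J₁ (r, s)) (by fun_prop) (fun r hr => hJ r hr s) ε hε
  have e : ∫ r in Ioo (-(2*δ)) (2*δ), ζ r * deriv f (r/ε - h s) * a s * (1 + r * J₁ (r, s)) =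
      (∫ r in Ioo (-(2*δ)) (2*δ), ζ r * deriv f (r/ε - h s) * (1 + r * J₁ (r, s))) * a s := by
    rw [← integral_mul_const]
    congr 1; ext r; ring
  rw [e, Real.norm_eq_abs, abs_mul]
  gcongr
end

section
/- (Localized diffuse-interface integral estimate with cancellation, in coordinates.) Let f ∈ S(ℝ) be a Schwartz function, δ > 0, M > 0, ζ ∈ C^∞(ℝ) with ζ = 1 on [−δ, δ] and ζ = 0 outside (−2δ, 2δ). Consider a Jacobian of the form J(r,s) = 1 + κ(s) r + r² J₂(r,s) with κ ∈ L^∞(𝕋¹), |κ| ≤ M, and |J₂| ≤ M. Then there is C > 0 such that for every measurable h : 𝕋¹ → ℝ with sup_s |h(s)| ≤ M, every ε ∈ (0,1], and all a, b ∈ L¹(𝕋¹) satisfying the cancellation condition ∫_{𝕋¹} ( a(s) κ(s) − b(s) ) ds = 0, one has | ∫_{−2δ}^{2δ} ∫_{𝕋¹} ζ(r) ( f'( r/ε − h(s) ) a(s) + ε f( r/ε − h(s) ) b(s) ) J(r,s) ds dr | ≤ C ε³ ( ‖a‖_{L¹(𝕋¹)} + ‖b‖_{L¹(𝕋¹)}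 ), with C independent of a, b, h, and ε. -/
open MeasureTheory Set

lemma aux_cov (G : ℝ → ℝ) (hG : Integrable G) (ε h : ℝ) (hε : 0 < ε) :
    Integrable (fun r => G (r / ε - h)) ∧ ∫ r, G (r / ε - h) = ε * ∫ x, G x := by
  constructor
  · exact (hG.comp_sub_right h).comp_div hε.ne'
  · rw [Measure.integral_comp_div (fun x => G (x - h)) ε, integral_sub_right_eq_self]
    simp [abs_of_pos hε]

lemma aux_moment (g : SchwartzMap ℝ ℝ) (M : ℝ) (k : ℕ) :
    ∃ C : ℝ, 0 ≤ C ∧ ∀ ε h K c : ℝ, 0 < ε → |h| ≤ M → 0 ≤ K → ∀ w : ℝ → ℝ, Measurable w →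
      (∀ r, |w r - c| ≤ K * |r| ^ k) →
      Integrable (fun r => w r * g (r / ε - h)) ∧
      |(∫ r, w r * g (r / ε - h)) - c * (ε * ∫ x, g x)| ≤ K * C * ε ^ (k + 1) := by
  set H : ℝ → ℝ := fun x => 2 ^ (k - 1) * (‖x‖ ^ k * ‖g x‖ + M ^ k * ‖g x‖) with hH
  have hHi : Integrable H :=
    ((g.integrable_pow_mul volume k).add (g.integrable.norm.const_mul _)).const_mul _
  refine ⟨|∫ x, H x|, abs_nonneg _, ?_⟩
  intro ε h K c hε hh hK w hw hwc
  obtain ⟨hi1, he1⟩ := aux_cov H hHi ε h hε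
  obtain ⟨hi2, he2⟩ := aux_cov g g.integrable ε h hε
  have hbd : ∀ r, ‖(w r - c) * g (r / ε - h)‖ ≤ K * ε ^ k * H (r / ε - h) := by
    intro r
    set x := r / ε - h with hx
    have hr : r = ε * (x + h) := by rw [hx]; field_simp; ring
    have h1 : |r| ^ k ≤ ε ^ k * (2 ^ (k - 1) * (|x| ^ k + M ^ k)) := by
      rw [hr, abs_mul, abs_of_pos hε, mul_pow]
      gcongr
      calc |x + h| ^ k ≤ (|x| + M) ^ k := by
            gcongr
            exact (abs_add_le x h).trans (by linarith)
        _ ≤ _ := add_pow_le (abs_nonneg _) ((abs_nonneg h).trans hh) k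
    rw [norm_mul, Real.norm_eq_abs, Real.norm_eq_abs, hH]
    calc |w r - c| * |g x| ≤ (K * |r| ^ k) * |g x| := by gcongr; exact hwc r
      _ ≤ (K * (ε ^ k * (2 ^ (k - 1) * (|x| ^ k + M ^ k)))) * |g x| := by gcongr
      _ = _ := by simp only [Real.norm_eq_abs]; ring
  have hgm : Measurable (fun r => g (r / ε - h)) := by
    have := g.continuous.measurable
    fun_prop
  have hint : Integrable (fun r => (w r - c) * g (r / ε - h)) :=
    (hi1.const_mul (K * ε ^ k)).mono' (((hw.sub_const c).mul hgm).aestronglyMeasurable)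
      (Filter.Eventually.of_forall hbd)
  have hw1 : (fun r => w r * g (r / ε - h)) =
      fun r => (w r - c) * g (r / ε - h) + c * g (r / ε - h) := by
    funext r; ring
  have hci := hi2.const_mul c
  refine ⟨by rw [hw1]; exact hint.add hci, ?_⟩
  rw [hw1, integral_add hint hci, integral_const_mul, he2, add_sub_cancel_right]
  calc |∫ r, (w r - c) * g (r / ε - h)| ≤ ∫ r, K * ε ^ k * H (r / ε - h) :=
        norm_integral_le_of_norm_le (hi1.const_mul (K * ε ^ k)) (Filter.Eventually.of_forall hbd)
    _ = K * (∫ x, H x) * ε ^ (k + 1) := by rw [integral_const_mul, he1]; ring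
    _ ≤ _ := by gcongr; exact le_abs_self _

/-- slice estimate -/
lemma aux_slice (f : SchwartzMap ℝ ℝ) (δ M : ℝ) (hδ : 0 < δ) (hM : 0 < M)
    (ζ : ℝ → ℝ) (hζ : ContDiff ℝ (⊤ : ℕ∞) ζ)
    (hζ1 : ∀ z : ℝ, |z| ≤ δ → ζ z = 1) (B : ℝ) (hB : ∀ r, |ζ r| ≤ B) (B' : ℝ)
    (hB' : ∀ r, |deriv ζ r| ≤ B') :
    ∃ C : ℝ, 0 < C ∧ ∀ h ε κ α β : ℝ, |h| ≤ M → 0 < ε → ε ≤ 1 → |κ| ≤ M →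
      ∀ W : ℝ → ℝ, Measurable W → (∀ r, |ζ r * W r| ≤ B * M) →
      |(∫ r, ζ r * (deriv f (r/ε - h) * α + ε * f (r/ε - h) * β)
            * (1 + κ * r + r^2 * W r)) - ε ^ 2 * (∫ x, f x) * (β - α * κ)|
        ≤ C * ε ^ 3 * (|α| + |β|) := by
  have hB0 : 0 ≤ B := (abs_nonneg _).trans (hB 0)
  have hB'0 : 0 ≤ B' := (abs_nonneg _).trans (hB' 0)
  set f' : SchwartzMap ℝ ℝ := SchwartzMap.derivCLM ℝ ℝ f with hf'
  have hf'a : ∀ x, deriv f x = f' x := fun x => by rw [hf', SchwartzMap.derivCLM_apply]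
  obtain ⟨C1, hC1, H1⟩ := aux_moment f M 1
  obtain ⟨C2, hC2, H2⟩ := aux_moment f M 2
  obtain ⟨C3, hC3, H3⟩ := aux_moment f' M 1
  obtain ⟨C4, hC4, H4⟩ := aux_moment f' M 2
  set K1 := (B + 1) / δ + B * M with hK1
  set K2 := B' / δ ^ 2 + B' * M / δ + (B + 1) * M / δ ^ 2 with hK2
  have hK1n : 0 ≤ K1 := by positivity
  have hK2n : 0 ≤ K2 := by positivity
  refine ⟨K2 * C2 + B * M * C4 + K1 * C1 + B * M * C2 + 1, by positivity, ?_⟩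
  intro h ε κ α β hh hε hε1 hκ W hW hWb
  have hζc : Continuous ζ := hζ.continuous
  have hζd : Differentiable ℝ ζ := hζ.differentiable (by simp)
  have hζ'c : Continuous (deriv ζ) := hζ.continuous_deriv (by simp)
  have hζ1' : ∀ r, |r| ≤ δ / 2 ∨ |r| < δ → deriv ζ r = 0 := by
    intro r hr
    have hr : |r| < δ := by rcases hr with hr | hr <;> linarith
    have : ζ =ᶠ[nhds r] fun _ => (1:ℝ) := by
      filter_upwards [(isOpen_lt continuous_abs continuous_const).mem_nhds hr] with z hz
      exact hζ1 z (le_of_lt hz)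
    rw [this.deriv_eq]; simp
  have hz1 : ∀ r, |ζ r - 1| ≤ B + 1 := fun r => by
    have := abs_sub (ζ r) 1
    have := hB r
    simp only [abs_one] at *
    linarith
  set φ : ℝ → ℝ := fun r => ζ r * (1 + κ * r) with hφ
  set φ' : ℝ → ℝ := fun r => deriv ζ r * (1 + κ * r) + ζ r * κ with hφ'
  have hφm : Measurable φ := by
    apply Continuous.measurable; fun_prop
  have hφ'm : Measurable φ' := by
    apply Continuous.measurable; fun_prop
  have hφb : ∀ r, |φ r - 1| ≤ K1 * |r| ^ 1 := by
    intro r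
    have e : φ r - 1 = (ζ r - 1) + ζ r * κ * r := by simp only [hφ]; ring
    have h1 : |ζ r - 1| ≤ (B + 1) / δ * |r| := by
      by_cases hr : |r| ≤ δ
      · rw [hζ1 r hr]; simp; positivity
      · push Not at hr
        calc |ζ r - 1| ≤ B + 1 := hz1 r
          _ = (B + 1) / δ * δ := by field_simp
          _ ≤ _ := by gcongr
    have h2 : |ζ r * κ * r| ≤ B * M * |r| := by
      rw [abs_mul, abs_mul]
      gcongr
      exact hB r
    rw [e, pow_one, hK1, add_mul]
    exact (abs_add_le _ _).trans (add_le_add h1 h2)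
  have hφ'b : ∀ r, |φ' r - κ| ≤ K2 * |r| ^ 2 := by
    intro r
    by_cases hr : |r| < δ
    · have : φ' r - κ = 0 := by
        simp only [hφ']; rw [hζ1' r (Or.inr hr), hζ1 r hr.le]; ring
      rw [this]; simp; positivity
    · push Not at hr
      have e : φ' r - κ = deriv ζ r + deriv ζ r * κ * r + (ζ r - 1) * κ := by
        simp only [hφ']; ring
      have h1 : |deriv ζ r| ≤ B' / δ ^ 2 * |r| ^ 2 := by
        calc |deriv ζ r| ≤ B' := hB' r
          _ = B' / δ ^ 2 * δ ^ 2 := by field_simp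
          _ ≤ _ := by gcongr
      have h2 : |deriv ζ r * κ * r| ≤ B' * M / δ * |r| ^ 2 := by
        rw [abs_mul, abs_mul]
        calc |deriv ζ r| * |κ| * |r| ≤ B' * M * |r| := by gcongr; exact hB' r
          _ = B' * M / δ * (δ * |r|) := by field_simp
          _ ≤ B' * M / δ * (|r| * |r|) := by gcongr
          _ = _ := by ring
      have h3 : |(ζ r - 1) * κ| ≤ (B + 1) * M / δ ^ 2 * |r| ^ 2 := by
        rw [abs_mul]
        calc |ζ r - 1| * |κ| ≤ (B + 1) * M := by gcongr; exact hz1 r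
          _ = (B + 1) * M / δ ^ 2 * δ ^ 2 := by field_simp
          _ ≤ _ := by gcongr
      rw [e, hK2]
      calc _ ≤ |deriv ζ r| + |deriv ζ r * κ * r| + |(ζ r - 1) * κ| := abs_add_three _ _ _
        _ ≤ _ := by linarith
  set ψ : ℝ → ℝ := fun r => ζ r * (r ^ 2 * W r) with hψ
  have hψm : Measurable ψ := by
    have := hζc.measurable
    fun_prop
  have hψb : ∀ r, |ψ r - 0| ≤ B * M * |r| ^ 2 := by
    intro r
    have e : ψ r - 0 = (ζ r * W r) * r ^ 2 := by simp only [hψ]; ring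
    rw [e, abs_mul, abs_pow]
    gcongr
    exact hWb r
  have hBM : 0 ≤ B * M := by positivity
  obtain ⟨i1, e1⟩ := H2 ε h K2 κ hε hh hK2n φ' hφ'm hφ'b
  obtain ⟨i2, e2⟩ := H4 ε h (B * M) 0 hε hh hBM ψ hψm hψb
  obtain ⟨i3, e3⟩ := H1 ε h K1 1 hε hh hK1n φ hφm hφb
  obtain ⟨i4, e4⟩ := H2 ε h (B * M) 0 hε hh hBM ψ hψm hψb
  obtain ⟨i5, -⟩ := H3 ε h K1 1 hε hh hK1n φ hφm hφb
  have ibp : ∫ r, φ r * f' (r / ε - h) = - (ε * ∫ r, φ' r * f (r / ε - h)) := by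
    have key : ∫ r, φ r * (f' (r / ε - h) * (1 / ε)) = - ∫ r, φ' r * f (r / ε - h) := by
      apply integral_mul_deriv_eq_deriv_mul_of_integrable
      · intro x _
        have := ((hζd x).hasDerivAt).mul (((hasDerivAt_id x).const_mul κ).const_add 1)
        have e : deriv ζ x * (1 + κ * id x) + ζ x * (κ * 1) = φ' x := by
          simp only [hφ', id]; ring
        rw [e] at this
        exact this
      · intro x _
        have h1 : HasDerivAt f (f' (x / ε - h)) (x / ε - h) := by
          rw [← hf'a]; exact f.differentiableAt.hasDerivAt
        have h2 : HasDerivAt (fun r : ℝ => r / ε - h) (1 / ε) x :=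
          ((hasDerivAt_id x).div_const ε).sub_const h
        exact h1.comp x h2
      · refine (i5.mul_const (1 / ε)).congr (Filter.Eventually.of_forall fun r => ?_)
        simp only [Pi.mul_apply]; ring
      · exact i1
      · exact i3
    have : ∀ r, φ r * f' (r / ε - h) = ε * (φ r * (f' (r / ε - h) * (1 / ε))) := fun r => by
      field_simp
    simp_rw [this]
    rw [integral_const_mul, key]; ring
  have split : (∫ r, ζ r * (deriv f (r/ε - h) * α + ε * f (r/ε - h) * β)
            * (1 + κ * r + r^2 * W r)) =
      α * (∫ r, φ r * f' (r / ε - h)) + α * (∫ r, ψ r * f' (r / ε - h))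
      + (ε * β) * (∫ r, φ r * f (r / ε - h)) + (ε * β) * (∫ r, ψ r * f (r / ε - h)) := by
    have j1 : Integrable (fun r => α * (φ r * f' (r / ε - h)) + α * (ψ r * f' (r / ε - h))) :=
      (i5.const_mul α).add (i2.const_mul α)
    have j2 : Integrable (fun r => α * (φ r * f' (r / ε - h)) + α * (ψ r * f' (r / ε - h))
        + (ε * β) * (φ r * f (r / ε - h))) := j1.add (i3.const_mul _)
    rw [← integral_const_mul, ← integral_const_mul, ← integral_const_mul, ← integral_const_mul,
      ← integral_add (i5.const_mul α) (i2.const_mul α),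
      ← integral_add j1 (i3.const_mul _), ← integral_add j2 (i4.const_mul _)]
    congr 1
    funext r
    simp only [hf'a, hφ, hψ, Pi.add_apply]
    ring
  rw [split, ibp]
  set I := ∫ x, f x
  set X1 := ∫ r, φ' r * f (r / ε - h)
  set X2 := ∫ r, ψ r * f' (r / ε - h)
  set X3 := ∫ r, φ r * f (r / ε - h)
  set X4 := ∫ r, ψ r * f (r / ε - h)
  have e : α * -(ε * X1) + α * X2 + ε * β * X3 + ε * β * X4 - ε ^ 2 * I * (β - α * κ) =
      -(α * ε) * (X1 - κ * (ε * I)) + α * X2 + (ε * β) * (X3 - 1 * (ε * I)) + ε * β * X4 := by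
    ring
  rw [e]
  simp only [zero_mul, sub_zero] at e2 e4
  have hp : ε ^ 4 ≤ ε ^ 3 := pow_le_pow_of_le_one hε.le hε1 (by norm_num)
  have b1 : |-(α * ε) * (X1 - κ * (ε * I))| ≤ K2 * C2 * ε ^ 3 * |α| := by
    rw [abs_mul, abs_neg, abs_mul, abs_of_pos hε]
    calc _ ≤ |α| * ε * (K2 * C2 * ε ^ 3) := by gcongr
      _ = K2 * C2 * ε ^ 4 * |α| := by ring
      _ ≤ _ := by gcongr
  have b2 : |α * X2| ≤ B * M * C4 * ε ^ 3 * |α| := by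
    rw [abs_mul]
    calc _ ≤ |α| * (B * M * C4 * ε ^ 3) := by gcongr
      _ = _ := by ring
  have b3 : |(ε * β) * (X3 - 1 * (ε * I))| ≤ K1 * C1 * ε ^ 3 * |β| := by
    rw [abs_mul, abs_mul, abs_of_pos hε]
    calc _ ≤ ε * |β| * (K1 * C1 * ε ^ 2) := by gcongr
      _ = _ := by ring
  have b4 : |ε * β * X4| ≤ B * M * C2 * ε ^ 3 * |β| := by
    rw [abs_mul, abs_mul, abs_of_pos hε]
    calc _ ≤ ε * |β| * (B * M * C2 * ε ^ 3) := by gcongr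
      _ = B * M * C2 * ε ^ 4 * |β| := by ring
      _ ≤ _ := by gcongr
  have hsum : ∀ x y z w : ℝ, |x + y + z + w| ≤ |x| + |y| + |z| + |w| := fun x y z w =>
    (abs_add_le _ _).trans (by linarith [abs_add_three x y z])
  refine (hsum _ _ _ _).trans ?_
  have n1 : 0 ≤ K2 * C2 * ε ^ 3 * |β| := by positivity
  have n2 : 0 ≤ B * M * C4 * ε ^ 3 * |β| := by positivity
  have n3 : 0 ≤ K1 * C1 * ε ^ 3 * |α| := by positivity
  have n4 : 0 ≤ B * M * C2 * ε ^ 3 * |α| := by positivity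
  have n5 : 0 ≤ ε ^ 3 * (|α| + |β|) := by positivity
  linarith

/-- Localized diffuse-interface integral estimate with cancellation, in coordinates:
with Jacobian J(r,s) = 1 + κ(s) r + r² J₂(r,s) and the cancellation condition
∫_{𝕋¹} (a κ - b) ds = 0, the localized integral of
ζ(r) ( f'(r/ε - h(s)) a(s) + ε f(r/ε - h(s)) b(s) ) J(r,s) is O(ε³ (‖a‖_{L¹}+‖b‖_{L¹})). -/
theorem localized_interface_integral_estimate_cancellation
    (f : SchwartzMap ℝ ℝ) (δ M : ℝ) (hδ : 0 < δ) (hM : 0 < M)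
    (ζ : ℝ → ℝ) (hζ : ContDiff ℝ (⊤ : ℕ∞) ζ)
    (hζ1 : ∀ z : ℝ, |z| ≤ δ → ζ z = 1)
    (hζ0 : ∀ z : ℝ, z ∉ Ioo (-(2*δ)) (2*δ) → ζ z = 0)
    (κ : AddCircle (1:ℝ) → ℝ) (hκm : Measurable κ) (hκ : ∀ s, |κ s| ≤ M)
    (J₂ : ℝ × AddCircle (1:ℝ) → ℝ) (hJ₂m : Measurable J₂)
    (hJ₂ : ∀ r ∈ Ioo (-(2*δ)) (2*δ), ∀ s, |J₂ (r, s)| ≤ M) :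
    ∃ C > 0, ∀ (h : AddCircle (1:ℝ) → ℝ), Measurable h → (∀ s, |h s| ≤ M) →
      ∀ ε : ℝ, ε ∈ Ioc (0:ℝ) 1 →
      ∀ (a b : AddCircle (1:ℝ) → ℝ), Integrable a → Integrable b →
        (∫ s : AddCircle (1:ℝ), (a s * κ s - b s)) = 0 →
      |∫ r in Ioo (-(2*δ)) (2*δ), ∫ s : AddCircle (1:ℝ),
          ζ r * (deriv f (r/ε - h s) * a s + ε * f (r/ε - h s) * b s)
            * (1 + κ s * r + r^2 * J₂ (r, s))|
        ≤ C * ε^3 * ((∫ s : AddCircle (1:ℝ), |a s|) + ∫ s : AddCircle (1:ℝ), |b s|) := by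
  have hcs : HasCompactSupport ζ :=
    HasCompactSupport.intro (isCompact_Icc (a := -(2*δ)) (b := 2*δ)) fun x hx =>
      hζ0 x fun hx' => hx (Ioo_subset_Icc_self hx')
  obtain ⟨B, hB⟩ := hcs.exists_bound_of_continuous hζ.continuous
  obtain ⟨B', hB'⟩ := hcs.deriv.exists_bound_of_continuous (hζ.continuous_deriv (by simp))
  simp only [Real.norm_eq_abs] at hB hB'
  have hB0 : 0 ≤ B := (abs_nonneg _).trans (hB 0)
  obtain ⟨C, hC, hmain⟩ := aux_slice f δ M hδ hM ζ hζ hζ1 B hB B' hB'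
  refine ⟨C, hC, ?_⟩
  intro h hhm hh ε hε a b ha hb hab
  have hJb : ∀ s r, |ζ r * J₂ (r, s)| ≤ B * M := by
    intro s r
    by_cases hr : r ∈ Ioo (-(2*δ)) (2*δ)
    · rw [abs_mul]
      have := hB r
      have := hJ₂ r hr s
      gcongr
    · rw [hζ0 r hr]; simp; positivity
  set F : ℝ → AddCircle (1:ℝ) → ℝ := fun r s =>
    ζ r * (deriv f (r/ε - h s) * a s + ε * f (r/ε - h s) * b s)
            * (1 + κ s * r + r^2 * J₂ (r, s)) with hF
  set μ : Measure ℝ := volume.restrict (Ioo (-(2*δ)) (2*δ)) with hμ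
  obtain ⟨D, hD⟩ : ∃ D, ∀ x, |f x| ≤ D := by
    obtain ⟨D, -, hD⟩ := f.decay 0 0
    exact ⟨D, fun x => by simpa using hD x⟩
  obtain ⟨D', hD'⟩ : ∃ D, ∀ x, |deriv f x| ≤ D := by
    obtain ⟨D, -, hD⟩ := (SchwartzMap.derivCLM ℝ ℝ f).decay 0 0
    exact ⟨D, fun x => by simpa [SchwartzMap.derivCLM_apply] using hD x⟩
  have hD0 := (abs_nonneg _).trans (hD 0)
  have hD'0 := (abs_nonneg _).trans (hD' 0)
  have hfm : Measurable f := f.continuous.measurable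
  have hf'm : Measurable (deriv f) := measurable_deriv _
  have hζm : Measurable ζ := hζ.continuous.measurable
  let V : ℝ × AddCircle (1:ℝ) → ℝ := fun p => ζ p.1 * (1 + κ p.2 * p.1 + p.1^2 * J₂ p)
  have hVm : Measurable V := by
    dsimp only [V]; fun_prop
  have hVb : ∀ p, |V p| ≤ B * (1 + M * (2*δ) + (2*δ)^2 * M) := by
    rintro ⟨r, s⟩
    by_cases hr : r ∈ Ioo (-(2*δ)) (2*δ)
    · have hr' : |r| ≤ 2*δ := (abs_lt.2 hr).le
      have h1 := hκ s
      have h2 := hJ₂ r hr s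
      have h3 := hB r
      simp only [V]
      rw [abs_mul]
      gcongr
      refine (abs_add_three _ _ _).trans ?_
      rw [abs_one, abs_mul, abs_mul, abs_pow]
      gcongr
    · simp only [V]; rw [hζ0 r hr]; simp; positivity
  have hint : Integrable (Function.uncurry F) (μ.prod volume) := by
    have i1 : Integrable (fun p : ℝ × AddCircle (1:ℝ) =>
        (V p * deriv f (p.1/ε - h p.2)) * a p.2) (μ.prod volume) := by
      refine (ha.comp_snd μ).bdd_mul (c := B * (1 + M * (2*δ) + (2*δ)^2 * M) * D') ?_ ?_
      · apply Measurable.aestronglyMeasurable; fun_prop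
      · refine Filter.Eventually.of_forall fun p => ?_
        rw [Real.norm_eq_abs, abs_mul]
        have := hVb p
        have := hD' (p.1/ε - h p.2)
        gcongr
    have i2 : Integrable (fun p : ℝ × AddCircle (1:ℝ) =>
        (V p * (ε * f (p.1/ε - h p.2))) * b p.2) (μ.prod volume) := by
      refine (hb.comp_snd μ).bdd_mul (c := B * (1 + M * (2*δ) + (2*δ)^2 * M) * (1 * D)) ?_ ?_
      · apply Measurable.aestronglyMeasurable; fun_prop
      · refine Filter.Eventually.of_forall fun p => ?_
        rw [Real.norm_eq_abs, abs_mul, abs_mul ε, abs_of_pos hε.1]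
        have := hVb p
        have := hD (p.1/ε - h p.2)
        have := hε.2
        have := hε.1.le
        gcongr
    refine (i1.add i2).congr (Filter.Eventually.of_forall fun p => ?_)
    simp only [Function.uncurry, hF, V, Pi.add_apply]
    ring
  have swap : ∫ r, ∫ s, F r s ∂volume ∂μ = ∫ s, ∫ r, F r s ∂μ := integral_integral_swap hint
  have hGi : Integrable (fun s => ∫ r, F r s ∂μ) := hint.integral_prod_right
  have hset : ∀ s, ∫ r, F r s ∂μ = ∫ r, F r s := fun s =>
    setIntegral_eq_integral_of_forall_compl_eq_zero fun r hr => by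
      simp only [hF]; rw [hζ0 r hr]; ring
  change |∫ r, ∫ s, F r s ∂volume ∂μ| ≤ _
  rw [swap]
  have haκ : Integrable (fun s => a s * κ s) :=
    ha.mul_bdd (c := M) hκm.aestronglyMeasurable (Filter.Eventually.of_forall hκ)
  have hc0 : ∫ s, (ε ^ 2 * (∫ x, f x)) * (b s - a s * κ s) = 0 := by
    rw [integral_const_mul]
    have : ∫ s, (b s - a s * κ s) = - ∫ s, (a s * κ s - b s) := by
      rw [← integral_neg]; congr 1; funext s; ring
    rw [this, hab]; simp
  have hci : Integrable (fun s => (ε ^ 2 * (∫ x, f x)) * (b s - a s * κ s)) :=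
    (hb.sub haκ).const_mul _
  have e : ∫ s, ∫ r, F r s ∂μ =
      ∫ s, ((∫ r, F r s ∂μ) - (ε ^ 2 * (∫ x, f x)) * (b s - a s * κ s)) := by
    rw [integral_sub hGi hci, hc0, sub_zero]
  rw [e, ← integral_add ha.abs hb.abs, ← integral_const_mul (C * ε ^ 3)]
  rw [← Real.norm_eq_abs]
  refine norm_integral_le_of_norm_le ((ha.abs.add hb.abs).const_mul _)
    (Filter.Eventually.of_forall fun s => ?_)
  rw [hset, Real.norm_eq_abs]
  exact hmain (h s) ε (κ s) (a s) (b s) (hh s) hε.1 hε.2 (hκ s) (fun r => J₂ (r, s))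
    (hJ₂m.comp (by fun_prop)) (hJb s)
end

section
/- (Trace-difference estimate against the profile derivative, in coordinates.) Let f be a smooth double-well potential, θ₀ the optimal profile, δ > 0, M > 0. Then there is C > 0 such that for every measurable h : 𝕋¹ → ℝ with sup_s |h(s)| ≤ M, every ε ∈ (0,1], and every w ∈ H¹((−2δ,2δ) × 𝕋¹): ∫_{−2δ}^{2δ} ∫_{𝕋¹} | w(r,s) − w(0,s) | θ₀'( r/ε − h(s) ) ds dr ≤ C ε^{3/2} ‖∂_r w‖_{L²((−2δ,2δ)×𝕋¹)}, where w(0,s) denotes the trace at r = 0 of the (for a.e. s absolutely continuous) function r ↦ w(r,s). -/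
open MeasureTheory Set Filter

lemma aux_cs (a b : ℝ) (hab : a ≤ b) (φ : ℝ → ℝ) (hφ : Continuous φ) :
    (∫ x in a..b, φ x) ^ 2 ≤ (b - a) * ∫ x in a..b, φ x ^ 2 := by
  rcases hab.eq_or_lt with rfl | hlt
  · simp
  set m := ∫ x in a..b, φ x with hm
  have h0 : 0 ≤ ∫ x in a..b, ((b - a) * φ x - m) ^ 2 :=
    intervalIntegral.integral_nonneg hab (fun x _ => sq_nonneg _)
  have h1 : ∫ x in a..b, ((b - a) * φ x - m) ^ 2
      = (b - a) ^ 2 * (∫ x in a..b, φ x ^ 2) - 2 * (b - a) * m * m + (b - a) * m ^ 2 := by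
    have : ∀ x, ((b - a) * φ x - m) ^ 2
        = (b - a) ^ 2 * φ x ^ 2 - 2 * (b - a) * m * φ x + m ^ 2 := fun x => by ring
    simp only [this]
    rw [intervalIntegral.integral_add, intervalIntegral.integral_sub,
      intervalIntegral.integral_const_mul, intervalIntegral.integral_const_mul,
      intervalIntegral.integral_const]
    · simp [hm]
    all_goals apply Continuous.intervalIntegrable; fun_prop
  rw [h1] at h0
  have h2 : 0 ≤ (b - a) * ((b - a) * (∫ x in a..b, φ x ^ 2) - m ^ 2) := by nlinarith
  have := nonneg_of_mul_nonneg_right h2 (sub_pos.2 hlt)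
  linarith

/-- convex decay -/
lemma aux_convex (g g' g'' : ℝ → ℝ) (k R : ℝ) (hk : 0 < k)
    (hg : ∀ x, HasDerivAt g (g' x) x) (hg' : ∀ x, HasDerivAt g' (g'' x) x)
    (hge : ∀ x, R ≤ x → k ^ 2 * g x ≤ g'' x) (hlim : Tendsto g atTop (nhds 0)) :
    ∀ x, R ≤ x → g x ≤ g R * Real.exp (-(k * (x - R))) := by
  have hexp : ∀ (c x : ℝ), HasDerivAt (fun x => Real.exp (c * x)) (Real.exp (c * x) * c) x := by
    intro c x
    have := ((hasDerivAt_id x).const_mul c).exp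
    simpa using this
  -- q monotone
  have hq : MonotoneOn (fun x => (g' x + k * g x) * Real.exp (-k * x)) (Ici R) := by
    have hd : ∀ x, HasDerivAt (fun x => (g' x + k * g x) * Real.exp (-k * x))
        ((g'' x + k * g' x) * Real.exp (-k * x)
          + (g' x + k * g x) * (Real.exp (-k * x) * (-k))) x := fun x =>
      ((hg' x).add ((hg x).const_mul k)).mul (hexp (-k) x)
    apply monotoneOn_of_deriv_nonneg (convex_Ici R)
    · exact fun x _ => (hd x).continuousAt.continuousWithinAt
    · exact fun x _ => (hd x).differentiableAt.differentiableWithinAt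
    · intro x hx
      rw [interior_Ici] at hx
      rw [(hd x).deriv]
      have := hge x hx.le
      have h2 := Real.exp_pos (-k * x)
      have : 0 ≤ (g'' x - k ^ 2 * g x) * Real.exp (-k * x) := by
        apply mul_nonneg _ h2.le; linarith
      nlinarith
  have hqn : ∀ x, R ≤ x → g' x + k * g x ≤ 0 := by
    intro x0 hx0
    by_contra! hpos
    set q0 := g' x0 + k * g x0 with hq0
    have h1 : ∀ x, x0 ≤ x → q0 ≤ g' x + k * g x := by
      intro x hx
      have h := hq (mem_Ici.2 hx0) (mem_Ici.2 (hx0.trans hx)) hx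
      simp only at h
      have he : Real.exp (-k * x) ≤ Real.exp (-k * x0) := by
        apply Real.exp_le_exp.2; nlinarith
      have he0 := Real.exp_pos (-k * x)
      have h2 : q0 * Real.exp (-k * x) ≤ (g' x + k * g x) * Real.exp (-k * x) :=
        (mul_le_mul_of_nonneg_left he hpos.le).trans h
      exact le_of_mul_le_mul_right h2 he0
    have h3 : ∀ᶠ x in atTop, g x < q0 / (2 * k) :=
      hlim.eventually (gt_mem_nhds (by positivity))
    obtain ⟨x1, hx1⟩ := eventually_atTop.1 h3
    set y := max x0 x1
    have h4 : ∀ x, y ≤ x → q0 / 2 ≤ g' x := by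
      intro x hx
      have a1 := h1 x ((le_max_left _ _).trans hx)
      have a2 := hx1 x ((le_max_right _ _).trans hx)
      have : k * g x ≤ q0 / 2 := by
        calc k * g x ≤ k * (q0 / (2 * k)) := by gcongr
          _ = q0 / 2 := by field_simp
      linarith
    have h5 : ∀ x, y ≤ x → q0 / 2 * (x - y) ≤ g x - g y := by
      intro x hx
      apply (convex_Ici y).mul_sub_le_image_sub_of_le_deriv
        (fun x _ => (hg x).continuousAt.continuousWithinAt)
        (fun x _ => (hg x).differentiableAt.differentiableWithinAt) _ y self_mem_Ici x hx hx
      intro z hz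
      rw [interior_Ici] at hz
      rw [(hg z).deriv]; exact h4 z hz.le
    have h6 : Tendsto (fun x => q0 / 2 * (x - y) + g y) atTop atTop := by
      apply tendsto_atTop_add_const_right
      apply Tendsto.const_mul_atTop (by positivity)
      exact tendsto_atTop_add_const_right _ _ tendsto_id
    have h7 : Tendsto g atTop atTop := by
      apply tendsto_atTop_mono' _ _ h6
      filter_upwards [eventually_ge_atTop y] with x hx
      linarith [h5 x hx]
    exact not_tendsto_nhds_of_tendsto_atTop h7 _ hlim
  have hanti : AntitoneOn (fun x => g x * Real.exp (k * x)) (Ici R) := by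
    have hd : ∀ x, HasDerivAt (fun x => g x * Real.exp (k * x))
        (g' x * Real.exp (k * x) + g x * (Real.exp (k * x) * k)) x := fun x =>
      (hg x).mul (hexp k x)
    apply antitoneOn_of_deriv_nonpos (convex_Ici R)
    · exact fun x _ => (hd x).continuousAt.continuousWithinAt
    · exact fun x _ => (hd x).differentiableAt.differentiableWithinAt
    · intro x hx
      rw [interior_Ici] at hx
      rw [(hd x).deriv]
      have h1 := hqn x hx.le
      have h2 := Real.exp_pos (k * x)
      nlinarith
  intro x hx
  have h := hanti (mem_Ici.2 le_rfl) (mem_Ici.2 hx) hx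
  simp only at h
  have e1 : Real.exp (-(k * (x - R))) = Real.exp (k * R) * Real.exp (-(k * x)) := by
    rw [← Real.exp_add]; ring_nf
  have e2 : Real.exp (k * x) * Real.exp (-(k * x)) = 1 := by
    rw [← Real.exp_add]; simp
  rw [e1]
  calc g x = g x * Real.exp (k * x) * Real.exp (-(k * x)) := by rw [mul_assoc, e2, mul_one]
    _ ≤ g R * Real.exp (k * R) * Real.exp (-(k * x)) := by gcongr
    _ = _ := by ring

lemma aux_decay_s18 (F θ θ' : ℝ → ℝ) (l c : ℝ) (hc : 0 < c) (hF : HasDerivAt F c l) (hFl : F l = 0)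
    (h1 : ∀ x, HasDerivAt θ (θ' x) x) (h2 : ∀ x, HasDerivAt θ' (F (θ x)) x)
    (hlim : Tendsto θ atTop (nhds l)) :
    ∃ a > 0, ∃ K, ∃ R, ∀ x, R ≤ x → |θ' x| ≤ K * Real.exp (-(a * x)) := by
  have hlo := (hasDerivAt_iff_isLittleO.1 hF).def (half_pos hc)
  have hev := hlim.eventually hlo
  obtain ⟨R, hR⟩ := eventually_atTop.1 hev
  simp only [hFl, sub_zero, smul_eq_mul, Real.norm_eq_abs] at hR
  have hu : ∀ x, R ≤ x → c / 2 * (θ x - l) ^ 2 ≤ (θ x - l) * F (θ x) := by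
    intro x hx
    have h := hR x hx
    have : |(θ x - l) * (F (θ x) - (θ x - l) * c)| ≤ c / 2 * (θ x - l) ^ 2 := by
      rw [abs_mul, ← sq_abs (θ x - l)]
      nlinarith [abs_nonneg (θ x - l)]
    have := (abs_le.1 this).1
    nlinarith
  have hF2 : ∀ x, R ≤ x → |F (θ x)| ≤ 2 * c * |θ x - l| := by
    intro x hx
    have h := hR x hx
    have h3 : |F (θ x)| ≤ |F (θ x) - (θ x - l) * c| + |(θ x - l) * c| := by
      have := abs_add_le (F (θ x) - (θ x - l) * c) ((θ x - l) * c)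
      simpa using this
    rw [abs_mul, abs_of_pos hc] at h3
    nlinarith [abs_nonneg (θ x - l)]
  set k := Real.sqrt c with hk
  have hkp : 0 < k := Real.sqrt_pos.2 hc
  have hk2 : k ^ 2 = c := Real.sq_sqrt hc.le
  have hg := aux_convex (fun x => (θ x - l) ^ 2) (fun x => 2 * ((θ x - l) * θ' x))
    (fun x => 2 * (θ' x * θ' x + (θ x - l) * F (θ x))) k R hkp
    (fun x => by
      have := ((h1 x).sub_const l).fun_pow 2
      refine HasDerivAt.congr_deriv this ?_
      norm_num
      ring)
    (fun x => by
      exact (((h1 x).sub_const l).mul (h2 x)).const_mul 2)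
    (fun x hx => by
      have := hu x hx
      rw [hk2]
      nlinarith [mul_self_nonneg (θ' x)])
    (by
      have := (hlim.sub_const l).pow 2
      simpa using this)
  set A := |θ R - l| * Real.exp (k / 2 * R) with hA
  have hA0 : 0 ≤ A := by positivity
  have hub : ∀ x, R ≤ x → |θ x - l| ≤ A * Real.exp (-(k / 2 * x)) := by
    intro x hx
    refine abs_le_of_sq_le_sq ?_ (by positivity)
    refine (hg x hx).trans (le_of_eq ?_)
    rw [hA, mul_pow, mul_pow, sq_abs, ← Real.exp_nat_mul, ← Real.exp_nat_mul, mul_assoc,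
      ← Real.exp_add]
    congr 2
    push_cast; ring
  refine ⟨k / 2, by positivity, 2 * A + 2 * c * A, R, ?_⟩
  intro x hx
  obtain ⟨ξ, hξ, hξe⟩ := exists_hasDerivAt_eq_slope θ θ' (show x < x + 1 by linarith)
    (fun y _ => (h1 y).continuousAt.continuousWithinAt) (fun y _ => h1 y)
  have hmono : ∀ y, x ≤ y → Real.exp (-(k / 2 * y)) ≤ Real.exp (-(k / 2 * x)) := by
    intro y hy
    apply Real.exp_le_exp.2
    nlinarith
  have b1 : |θ' ξ| ≤ 2 * A * Real.exp (-(k / 2 * x)) := by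
    rw [hξe]
    have e : (θ (x + 1) - θ x) / (x + 1 - x) = (θ (x + 1) - l) - (θ x - l) := by
      rw [add_sub_cancel_left]; ring
    rw [e]
    refine (abs_sub _ _).trans ?_
    have c1 := hub (x + 1) (by linarith)
    have c2 := hub x hx
    have c3 := mul_le_mul_of_nonneg_left (hmono (x + 1) (by linarith)) hA0
    linarith
  have b2 : |θ' ξ - θ' x| ≤ 2 * c * A * Real.exp (-(k / 2 * x)) := by
    obtain ⟨η, hη, hηe⟩ := exists_hasDerivAt_eq_slope θ' (fun y => F (θ y)) hξ.1
      (fun y _ => (h2 y).continuousAt.continuousWithinAt) (fun y _ => h2 y)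
    have hpos : 0 < ξ - x := sub_pos.2 hξ.1
    have e : θ' ξ - θ' x = F (θ η) * (ξ - x) := by
      rw [hηe]; field_simp
    rw [e, abs_mul, abs_of_pos hpos]
    have c1 := hF2 η (by linarith [hη.1])
    have c2 := hub η (by linarith [hη.1])
    have c3 := mul_le_mul_of_nonneg_left (hmono η hη.1.le) hA0
    have c4 : ξ - x ≤ 1 := by linarith [hξ.2]
    have c5 : |F (θ η)| * (ξ - x) ≤ |F (θ η)| := mul_le_of_le_one_right (abs_nonneg _) c4
    have c6 : 2 * c * |θ η - l| ≤ 2 * c * (A * Real.exp (-(k / 2 * x))) := by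
      gcongr; linarith
    linarith
  have b3 := abs_sub_abs_le_abs_sub (θ' x) (θ' ξ)
  rw [abs_sub_comm] at b3
  nlinarith

lemma aux_global (F θ θ' : ℝ → ℝ) (c d : ℝ) (hc : 0 < c) (hd : 0 < d)
    (hF : HasDerivAt F c 1) (hFl : F 1 = 0)
    (hF' : HasDerivAt F d (-1)) (hFl' : F (-1) = 0)
    (h1 : ∀ x, HasDerivAt θ (θ' x) x) (h2 : ∀ x, HasDerivAt θ' (F (θ x)) x)
    (hlim : Tendsto θ atTop (nhds 1)) (hlim' : Tendsto θ atBot (nhds (-1))) :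
    ∃ a > 0, ∃ K > 0, ∀ x, |θ' x| ≤ K * Real.exp (-(a * |x|)) := by
  obtain ⟨a1, ha1, K1, R1, H1⟩ := aux_decay_s18 F θ θ' 1 c hc hF hFl h1 h2 hlim
  obtain ⟨a2, ha2, K2, R2, H2⟩ := aux_decay_s18 F (fun x => θ (-x)) (fun x => -θ' (-x)) (-1) d hd hF' hFl'
    (fun x => by
      have := (h1 (-x)).scomp x (hasDerivAt_neg x)
      simpa [Function.comp_def] using this)
    (fun x => by
      have := ((h2 (-x)).scomp x (hasDerivAt_neg x)).fun_neg
      simpa [Function.comp_def] using this)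
    (hlim'.comp tendsto_neg_atTop_atBot)
  set a := min a1 a2
  have ha : 0 < a := lt_min ha1 ha2
  set R := max 0 (max R1 R2)
  have hR0 : 0 ≤ R := le_max_left _ _
  have hR1 : R1 ≤ R := (le_max_left _ _).trans (le_max_right _ _)
  have hR2 : R2 ≤ R := (le_max_right _ _).trans (le_max_right _ _)
  have hcont : Continuous θ' := continuous_iff_continuousAt.2 fun x => (h2 x).continuousAt
  obtain ⟨B, hB⟩ := (isCompact_Icc (a := -R) (b := R)).exists_bound_of_continuousOn hcont.continuousOn
  refine ⟨a, ha, |K1| + |K2| + |B| * Real.exp (a * R) + 1, by positivity, ?_⟩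
  intro x
  have key : ∀ (b K y : ℝ), a ≤ b → 0 ≤ y → K * Real.exp (-(b * y)) ≤ |K| * Real.exp (-(a * y)) := by
    intro b K y hb hy
    have : Real.exp (-(b * y)) ≤ Real.exp (-(a * y)) := by
      apply Real.exp_le_exp.2; nlinarith
    exact mul_le_mul (le_abs_self K) this (Real.exp_pos _).le (abs_nonneg _)
  have e0 := Real.exp_pos (-(a * |x|))
  have e1 : 0 ≤ |K1| * Real.exp (-(a * |x|)) := by positivity
  have e2 : 0 ≤ |K2| * Real.exp (-(a * |x|)) := by positivity
  have e3 : 0 ≤ |B| * Real.exp (a * R) * Real.exp (-(a * |x|)) := by positivity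
  have goal' : |θ' x| ≤ |K1| * Real.exp (-(a * |x|)) + |K2| * Real.exp (-(a * |x|))
      + |B| * Real.exp (a * R) * Real.exp (-(a * |x|)) := by
    rcases le_total |x| R with hx | hx
    · have b1 := hB x (abs_le.1 hx)
      rw [Real.norm_eq_abs] at b1
      have b2 : 1 ≤ Real.exp (a * R) * Real.exp (-(a * |x|)) := by
        rw [← Real.exp_add]
        apply Real.one_le_exp; nlinarith
      have b3 : |B| * 1 ≤ |B| * (Real.exp (a * R) * Real.exp (-(a * |x|))) :=
        mul_le_mul_of_nonneg_left b2 (abs_nonneg _)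
      linarith [le_abs_self B]
    · rcases le_total 0 x with h0 | h0
      · have hxa : |x| = x := abs_of_nonneg h0
        rw [hxa] at hx e0 e1 e2 e3 ⊢
        have := H1 x (hR1.trans hx)
        have := key a1 K1 x (min_le_left _ _) h0
        linarith
      · have hxa : |x| = -x := abs_of_nonpos h0
        rw [hxa] at hx e0 e1 e2 e3 ⊢
        have t1 := H2 (-x) (hR2.trans hx)
        rw [neg_neg, abs_neg] at t1
        have := key a2 K2 (-x) (min_le_right _ _) (by linarith)
        linarith
  nlinarith

lemma aux_integrable (b : ℝ) (hb : 0 < b) : Integrable (fun x : ℝ => Real.exp (-(b * |x|))) := by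
  rw [← integrableOn_univ, ← Iic_union_Ioi (a := (0:ℝ))]
  apply IntegrableOn.union
  · refine (integrableOn_exp_mul_Iic hb 0).congr_fun ?_ measurableSet_Iic
    intro x hx
    simp only [abs_of_nonpos (mem_Iic.1 hx)]
    ring_nf
  · refine (integrableOn_exp_mul_Ioi (neg_lt_zero.2 hb) 0).congr_fun ?_ measurableSet_Ioi
    intro x hx
    simp only [abs_of_pos (mem_Ioi.1 hx)]
    ring_nf

lemma aux_trace (D : ℝ) (u φ : ℝ → ℝ) (hu : ∀ x, HasDerivAt u (φ x) x) (hφ : Continuous φ)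
    (r : ℝ) (hr : r ∈ Ioo (-D) D) :
    |u r - u 0| ≤ Real.sqrt |r| * Real.sqrt (∫ x in (-D)..D, φ x ^ 2) := by
  have hD : 0 < D := by linarith [hr.1, hr.2]
  have hfc : ∀ a b : ℝ, ∫ x in a..b, φ x = u b - u a := fun a b =>
    intervalIntegral.integral_eq_sub_of_hasDerivAt (fun x _ => hu x) (hφ.intervalIntegrable _ _)
  have key : ∀ a b : ℝ, -D ≤ a → a ≤ b → b ≤ D →
      |u b - u a| ≤ Real.sqrt (b - a) * Real.sqrt (∫ x in (-D)..D, φ x ^ 2) := by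
    intro a b h1 h2 h3
    have hm : ∫ x in a..b, φ x ^ 2 ≤ ∫ x in (-D)..D, φ x ^ 2 := by
      apply intervalIntegral.integral_mono_interval h1 h2 h3
      · exact Eventually.of_forall fun x => sq_nonneg _
      · exact (hφ.pow 2).intervalIntegrable _ _
    rw [← Real.sqrt_mul (sub_nonneg.2 h2)]
    apply Real.abs_le_sqrt
    rw [← hfc]
    exact (aux_cs a b h2 φ hφ).trans (mul_le_mul_of_nonneg_left hm (sub_nonneg.2 h2))
  rcases le_total 0 r with h0 | h0
  · have := key 0 r (by linarith) h0 hr.2.le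
    rw [sub_zero] at this
    rwa [abs_of_nonneg h0]
  · have := key r 0 hr.1.le h0 hD.le
    rw [abs_sub_comm]
    rwa [zero_sub, ← abs_of_nonpos h0] at this

/-- Trace-difference estimate against the profile derivative, in coordinates:
∫∫ |w(r,s) - w(0,s)| θ₀'(r/ε - h(s)) ds dr ≤ C ε^{3/2} ‖∂_r w‖_{L²}, formulated for
functions on ℝ² that are 1-periodic in the second (tangential) variable. -/
theorem trace_difference_profile_estimate
    (f : ℝ → ℝ)
    (hf : ContDiff ℝ (⊤ : ℕ∞) f)
    (hfeven : ∀ x, f (-x) = f x)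
    (hf1 : f 1 = 0) (hfm1 : f (-1) = 0)
    (hf'1 : deriv f 1 = 0) (hf'm1 : deriv f (-1) = 0)
    (hf''1 : 0 < iteratedDeriv 2 f 1) (hf''m1 : 0 < iteratedDeriv 2 f (-1))
    (hfpos : ∀ x ∈ Set.Ioo (-1:ℝ) 1, 0 < f x)
    (θ₀ : ℝ → ℝ)
    (hθreg : ContDiff ℝ 2 θ₀)
    (hODE : ∀ ρ, deriv (deriv θ₀) ρ = deriv f (θ₀ ρ))
    (hlimtop : Tendsto θ₀ atTop (nhds 1))
    (hlimbot : Tendsto θ₀ atBot (nhds (-1)))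
    (hzero : θ₀ 0 = 0)
    (δ M : ℝ) (hδ : 0 < δ) (hM : 0 < M) :
    ∃ C > 0, ∀ h : ℝ → ℝ, Measurable h → (∀ s, h (s + 1) = h s) → (∀ s, |h s| ≤ M) →
      ∀ ε : ℝ, ε ∈ Ioc (0:ℝ) 1 →
      ∀ w : ℝ × ℝ → ℝ, ContDiff ℝ 1 w → (∀ r s : ℝ, w (r, s + 1) = w (r, s)) →
      (∫ r in Ioo (-(2*δ)) (2*δ), ∫ s in Ioo (0:ℝ) 1,
          |w (r, s) - w (0, s)| * deriv θ₀ (r/ε - h s))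
        ≤ C * ε ^ ((3:ℝ)/2) *
          Real.sqrt (∫ p in (Ioo (-(2*δ)) (2*δ)) ×ˢ (Ioo (0:ℝ) 1),
            (fderiv ℝ w p (1, 0)) ^ 2) := by
  have hθ1 : ∀ x, HasDerivAt θ₀ (deriv θ₀ x) x := fun x =>
    (hθreg.differentiable (by norm_num) x).hasDerivAt
  have hθ2 : ∀ x, HasDerivAt (deriv θ₀) (deriv f (θ₀ x)) x := fun x => by
    rw [← hODE x]
    have : ContDiff ℝ 1 (deriv θ₀) := by
      have h2 : ContDiff ℝ (1 + 1) θ₀ := by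
        rw [one_add_one_eq_two]; exact hθreg
      exact (contDiff_succ_iff_deriv.1 h2).2.2
    exact (this.differentiable (by norm_num) x).hasDerivAt
  have hfd : ∀ x, HasDerivAt (deriv f) (iteratedDeriv 2 f x) x := fun x => by
    have h := hf.differentiable_iteratedDeriv 1 (by exact_mod_cast WithTop.coe_lt_top 1) x
    rw [iteratedDeriv_succ]
    rw [iteratedDeriv_one] at *
    exact h.hasDerivAt
  obtain ⟨a, ha, K, hK, hdec⟩ := aux_global (deriv f) θ₀ (deriv θ₀) _ _ hf''1 hf''m1 (hfd 1) hf'1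
    (hfd (-1)) hf'm1 hθ1 hθ2 hlimtop hlimbot
  set b := a / 2 with hb
  have hbp : 0 < b := by positivity
  set J := ∫ x : ℝ, Real.exp (-(b * |x|)) with hJ
  have hJ0 : 0 ≤ J := integral_nonneg fun x => (Real.exp_pos _).le
  -- sqrt bound
  obtain ⟨S, hS, hSb⟩ : ∃ S > 0, ∀ x : ℝ, 0 ≤ x → Real.sqrt x ≤ S * Real.exp (b * x) := by
    refine ⟨1 + 1 / b, by positivity, fun x hx => ?_⟩
    have h1 : Real.sqrt x ≤ 1 + x := by
      rw [Real.sqrt_le_left (by positivity)]; nlinarith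
    have h2 := Real.add_one_le_exp (b * x)
    have h3 : x ≤ 1 / b * Real.exp (b * x) := by
      calc x = 1 / b * (b * x) := by field_simp
        _ ≤ _ := by gcongr; linarith
    have h4 : 1 ≤ Real.exp (b * x) := Real.one_le_exp (by positivity)
    linarith
  set P := K * Real.exp (a * M) * S with hP
  have hPp : 0 < P := by positivity
  refine ⟨P * J + 1, by positivity, ?_⟩
  intro h hmeas hper hbd ε hε w hw hwper
  have hε0 : 0 < ε := hε.1
  set W : ℝ × ℝ → ℝ := fun p => fderiv ℝ w p (1, 0) with hW
  have hWc : Continuous W := (hw.continuous_fderiv (by norm_num)).clm_apply continuous_const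
  have hder : ∀ s r : ℝ, HasDerivAt (fun r => w (r, s)) (W (r, s)) r := by
    intro s r
    have h1 : HasFDerivAt w (fderiv ℝ w (r, s)) (r, s) :=
      (hw.differentiable (by norm_num) (r, s)).hasFDerivAt
    exact h1.comp_hasDerivAt r ((hasDerivAt_id r).prodMk (hasDerivAt_const r s))
  set D := 2 * δ with hD
  have hDp : 0 < D := by positivity
  set G : ℝ → ℝ := fun s => Real.sqrt (∫ x in (-D)..D, W (x, s) ^ 2) with hG
  have hG2c : Continuous fun s => ∫ x in (-D)..D, W (x, s) ^ 2 :=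
    intervalIntegral.continuous_parametric_intervalIntegral_of_continuous'
      (f := fun s x => W (x, s) ^ 2) (by unfold Function.uncurry; fun_prop) _ _
  have hGc : Continuous G := hG2c.sqrt
  have hG0 : ∀ s, 0 ≤ G s := fun s => Real.sqrt_nonneg _
  set N := ∫ p in (Ioo (-D) D) ×ˢ (Ioo (0:ℝ) 1), W p ^ 2 with hN
  have hint : IntegrableOn (fun p => W p ^ 2) ((Ioo (-D) D) ×ˢ (Ioo (0:ℝ) 1)) := by
    apply IntegrableOn.mono_set (t := (Icc (-D) D) ×ˢ (Icc (0:ℝ) 1))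
    · exact (hWc.pow 2).continuousOn.integrableOn_compact (isCompact_Icc.prod isCompact_Icc)
    · exact prod_mono Ioo_subset_Icc_self Ioo_subset_Icc_self
  have hNeq : N = ∫ s in (0:ℝ)..1, G s ^ 2 := by
    have hint' := hint
    rw [IntegrableOn, Measure.volume_eq_prod, ← Measure.prod_restrict] at hint'
    rw [hN, Measure.volume_eq_prod, ← Measure.prod_restrict, integral_prod_symm _ hint',
      intervalIntegral.integral_of_le zero_le_one, integral_Ioc_eq_integral_Ioo]
    congr 1
    ext s
    rw [hG]
    simp only
    rw [Real.sq_sqrt, intervalIntegral.integral_of_le (by linarith), integral_Ioc_eq_integral_Ioo]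
    exact intervalIntegral.integral_nonneg (by linarith) fun x _ => sq_nonneg _
  have hGN : ∫ s in Ioo (0:ℝ) 1, G s ≤ Real.sqrt N := by
    have h1 := aux_cs 0 1 zero_le_one G hGc
    rw [← hNeq, sub_zero, one_mul] at h1
    rw [← integral_Ioc_eq_integral_Ioo, ← intervalIntegral.integral_of_le zero_le_one]
    exact Real.le_sqrt_of_sq_le h1
  have hGint : IntegrableOn G (Ioo (0:ℝ) 1) :=
    (hGc.continuousOn.integrableOn_compact isCompact_Icc).mono_set Ioo_subset_Icc_self
  -- pointwise bound
  have hpt : ∀ r ∈ Ioo (-D) D, ∀ s, ‖|w (r, s) - w (0, s)| * deriv θ₀ (r/ε - h s)‖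
      ≤ P * Real.sqrt ε * Real.exp (-(b * |r / ε|)) * G s := by
    intro r hr s
    rw [norm_mul, Real.norm_eq_abs, abs_abs, Real.norm_eq_abs]
    have t1 := aux_trace D (fun r => w (r, s)) (fun r => W (r, s)) (hder s) (by fun_prop) r hr
    have t2 := hdec (r / ε - h s)
    have t3 : Real.exp (-(a * |r / ε - h s|)) ≤ Real.exp (a * M) * Real.exp (-(a * |r / ε|)) := by
      rw [← Real.exp_add]
      apply Real.exp_le_exp.2
      have := abs_sub_abs_le_abs_sub (r / ε) (h s)
      have := hbd s
      nlinarith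
    have t4 : Real.sqrt |r| ≤ Real.sqrt ε * (S * Real.exp (b * |r / ε|)) := by
      have e : |r| = ε * |r / ε| := by
        rw [abs_div, abs_of_pos hε0]; field_simp
      rw [e, Real.sqrt_mul hε0.le]
      exact mul_le_mul_of_nonneg_left (hSb _ (abs_nonneg _)) (Real.sqrt_nonneg _)
    have t5 : Real.exp (b * |r / ε|) * Real.exp (-(a * |r / ε|)) = Real.exp (-(b * |r / ε|)) := by
      rw [← Real.exp_add, hb]; congr 1; ring
    calc |w (r, s) - w (0, s)| * |deriv θ₀ (r/ε - h s)|
        ≤ (Real.sqrt ε * (S * Real.exp (b * |r / ε|)) * G s)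
          * (K * (Real.exp (a * M) * Real.exp (-(a * |r / ε|)))) := by
          apply mul_le_mul
          · exact t1.trans (mul_le_mul_of_nonneg_right t4 (hG0 s))
          · exact t2.trans (mul_le_mul_of_nonneg_left t3 hK.le)
          · exact abs_nonneg _
          · have := hG0 s
            positivity
      _ = P * Real.sqrt ε * (Real.exp (b * |r / ε|) * Real.exp (-(a * |r / ε|))) * G s := by
          rw [hP]; ring
      _ = _ := by rw [t5]
  have hinner : ∀ r ∈ Ioo (-D) D, ‖∫ s in Ioo (0:ℝ) 1, |w (r, s) - w (0, s)| * deriv θ₀ (r/ε - h s)‖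
      ≤ P * Real.sqrt ε * Real.sqrt N * Real.exp (-(b * |r / ε|)) := by
    intro r hr
    have h1 := norm_integral_le_of_norm_le (μ := volume.restrict (Ioo (0:ℝ) 1))
      (hGint.const_mul (P * Real.sqrt ε * Real.exp (-(b * |r / ε|))))
      (Eventually.of_forall fun s => hpt r hr s)
    refine h1.trans ?_
    rw [integral_const_mul]
    have : 0 ≤ P * Real.sqrt ε * Real.exp (-(b * |r / ε|)) := by positivity
    have := mul_le_mul_of_nonneg_left hGN this
    linarith
  have hI : Integrable (fun r : ℝ => Real.exp (-(b * |r / ε|))) :=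
    (aux_integrable b hbp).comp_div hε0.ne'
  have hout := norm_integral_le_of_norm_le (μ := volume.restrict (Ioo (-D) D))
      (hI.integrableOn.const_mul (P * Real.sqrt ε * Real.sqrt N))
      ((ae_restrict_mem measurableSet_Ioo).mono hinner)
  refine (le_abs_self _).trans (hout.trans ?_)
  rw [integral_const_mul]
  have hle : ∫ r in Ioo (-D) D, Real.exp (-(b * |r / ε|)) ≤ ε * J := by
    have h1 := setIntegral_le_integral (s := Ioo (-D) D) hI
      (Eventually.of_forall fun x => (Real.exp_pos _).le)
    have h2 := Measure.integral_comp_div (fun x : ℝ => Real.exp (-(b * |x|))) ε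
    rw [abs_of_pos hε0, smul_eq_mul] at h2
    rw [h2] at h1
    exact h1
  have hpow : ε ^ ((3:ℝ)/2) = Real.sqrt ε * ε := by
    rw [Real.sqrt_eq_rpow, show ((3:ℝ)/2) = 1/2 + 1 by norm_num, Real.rpow_add hε0, Real.rpow_one]
  rw [hpow]
  calc P * Real.sqrt ε * Real.sqrt N * ∫ r in Ioo (-D) D, Real.exp (-(b * |r / ε|))
      ≤ P * Real.sqrt ε * Real.sqrt N * (ε * J) := by gcongr
    _ = (P * J) * (Real.sqrt ε * ε) * Real.sqrt N := by ring
    _ ≤ (P * J + 1) * (Real.sqrt ε * ε) * Real.sqrt N := by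
      gcongr
      linarith
end
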